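/- (Generalized factorization.) Let 1 < p, s < ∞. A weight w belongs to A_p ∩ RH_s if and only if there exist weights v₁, v₂ such that w = v₁ v₂, v₁ ∈ A_1 ∩ RH_s, and v₂ ∈ A_p ∩ RH_∞. -/

import Mathlib

open MeasureTheory ENNReal
open scoped Classical

noncomputable section

variable {n : ℕ}

/-- An axis-parallel half-open cube in `ℝⁿ`. -/
def IsCube (Q : Set (Fin n → ℝ)) : Prop :=
  ∃ (a : Fin n → ℝ) (l : ℝ), 0 < l ∧ Q = {x | ∀ i, a i ≤ x i ∧ x i < a i + l}

/-- The average `⨍_Q f` of an `ℝ≥0∞`-valued function over a set, w.r.t. Lebesgue measure. -/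
def eavg (Q : Set (Fin n → ℝ)) (f : (Fin n → ℝ) → ℝ≥0∞) : ℝ≥0∞ :=
  (∫⁻ x in Q, f x) / volume Q

/-- A weight: measurable, a.e. positive and finite, and locally integrable. -/
def IsWeight (w : (Fin n → ℝ) → ℝ≥0∞) : Prop :=
  Measurable w ∧ (∀ᵐ x ∂(volume : Measure (Fin n → ℝ)), 0 < w x ∧ w x < ∞) ∧
    ∀ Q : Set (Fin n → ℝ), IsCube Q → ∫⁻ x in Q, w x < ∞

/-- The Muckenhoupt `A_p` constant, `1 ≤ p < ∞` (ess-sup form when `p = 1`). -/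
def ApConst (p : ℝ) (w : (Fin n → ℝ) → ℝ≥0∞) : ℝ≥0∞ :=
  if p = 1 then
    ⨆ (Q : Set (Fin n → ℝ)) (_ : IsCube Q),
      essSup (fun x => eavg Q w / w x) (volume.restrict Q)
  else
    ⨆ (Q : Set (Fin n → ℝ)) (_ : IsCube Q),
      eavg Q w * (eavg Q fun x => w x ^ (1 - p / (p - 1))) ^ (p - 1)

/-- Membership in the Muckenhoupt class `A_p`. -/
def MemAp (p : ℝ) (w : (Fin n → ℝ) → ℝ≥0∞) : Prop := ApConst p w < ∞

/-- The reverse Hölder `RH_s` constant. -/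
def RHConst (s : ℝ) (w : (Fin n → ℝ) → ℝ≥0∞) : ℝ≥0∞ :=
  ⨆ (Q : Set (Fin n → ℝ)) (_ : IsCube Q),
    (eavg Q fun x => w x ^ s) ^ (1 / s) / eavg Q w

/-- Membership in the reverse Hölder class `RH_s`. -/
def MemRH (s : ℝ) (w : (Fin n → ℝ) → ℝ≥0∞) : Prop := RHConst s w < ∞

/-- The `RH_∞` constant. -/
def RHInfConst (w : (Fin n → ℝ) → ℝ≥0∞) : ℝ≥0∞ :=
  ⨆ (Q : Set (Fin n → ℝ)) (_ : IsCube Q),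
    essSup (fun x => w x / eavg Q w) (volume.restrict Q)

/-- Membership in `RH_∞`. -/
def MemRHInf (w : (Fin n → ℝ) → ℝ≥0∞) : Prop := RHInfConst w < ∞

/-- The Hardy–Littlewood maximal operator (over all cubes containing `x`). -/
def maximal (f : (Fin n → ℝ) → ℝ) (x : Fin n → ℝ) : ℝ≥0∞ :=
  ⨆ (Q : Set (Fin n → ℝ)) (_ : IsCube Q) (_ : x ∈ Q),
    eavg Q fun y => ENNReal.ofReal |f y|

/-- The Hardy–Littlewood maximal operator acting on `ℝ≥0∞`-valued functions. -/
def emaximal (f : (Fin n → ℝ) → ℝ≥0∞) (x : Fin n → ℝ) : ℝ≥0∞ :=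
  ⨆ (Q : Set (Fin n → ℝ)) (_ : IsCube Q) (_ : x ∈ Q), eavg Q f

/-- The norm `‖f‖_{L^p(w)} = (∫ f^p w dx)^(1/p)`. -/
def wLpNorm (p : ℝ) (w f : (Fin n → ℝ) → ℝ≥0∞) : ℝ≥0∞ :=
  (∫⁻ x, f x ^ p * w x) ^ (1 / p)


/-! ### Maximal function over a countable family -/

/-- Maximal function w.r.t. a measure and a family of sets. -/
def MB {α ι : Type*} [MeasurableSpace α] (B : ι → Set α) (μ : Measure α) (f : α → ℝ≥0∞) (x : α) :
    ℝ≥0∞ :=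
  ⨆ i, (B i).indicator (fun _ => (∫⁻ y in B i, f y ∂μ) / μ (B i)) x

section MBsec

variable {α ι : Type*} [MeasurableSpace α] {B : ι → Set α} {μ : Measure α}

lemma MB_le_of_mem {f : α → ℝ≥0∞} {x : α} {i : ι} (hx : x ∈ B i) :
    (∫⁻ y in B i, f y ∂μ) / μ (B i) ≤ MB B μ f x := by
  refine le_trans ?_ (le_iSup _ i)
  simp [hx]

lemma MB_le {f : α → ℝ≥0∞} {x : α} {c : ℝ≥0∞}
    (h : ∀ i, x ∈ B i → (∫⁻ y in B i, f y ∂μ) / μ (B i) ≤ c) : MB B μ f x ≤ c := by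
  refine iSup_le fun i => ?_
  by_cases hx : x ∈ B i
  · simpa [hx] using h i hx
  · simp [hx]

lemma MB_lt_iff {f : α → ℝ≥0∞} {x : α} {c : ℝ≥0∞} :
    c < MB B μ f x ↔ ∃ i, x ∈ B i ∧ c < (∫⁻ y in B i, f y ∂μ) / μ (B i) := by
  unfold MB
  rw [lt_iSup_iff]
  refine exists_congr fun i => ?_
  by_cases hx : x ∈ B i <;> simp [hx]

lemma MB_measurable [Countable ι] (hB : ∀ i, MeasurableSet (B i)) (f : α → ℝ≥0∞) :
    Measurable (MB B μ f) :=
  Measurable.iSup fun i => measurable_const.indicator (hB i)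

lemma MB_mono {f g : α → ℝ≥0∞} (h : f ≤ g) : MB B μ f ≤ MB B μ g := by
  intro x
  refine MB_le fun i hi => le_trans ?_ (MB_le_of_mem hi)
  gcongr
  exact h _

lemma MB_iSup {f : ℕ → α → ℝ≥0∞} (hf : ∀ k, Measurable (f k)) (hm : Monotone f) (x : α) :
    MB B μ (fun y => ⨆ k, f k y) x ≤ ⨆ k, MB B μ (f k) x := by
  refine MB_le fun i hi => ?_
  rw [lintegral_iSup hf hm, ENNReal.iSup_div]
  exact iSup_mono fun k => MB_le_of_mem hi

lemma MB_weak [Countable ι] (E : ι → Set α) (δ : ι → ℝ) (hB : ∀ i, MeasurableSet (B i))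
    (hδ : ∀ i, 0 ≤ δ i) (hne : ∀ i, (B i).Nonempty)
    (hE : ∀ a b, (B a ∩ B b).Nonempty → δ a ≤ 2 * δ b → B a ⊆ E b)
    (D : ℝ≥0∞) (hD : ∀ i, μ (E i) ≤ D * μ (B i))
    (f : α → ℝ≥0∞) (t : ℝ≥0∞) :
    t * μ {x | t < MB B μ f x} ≤ D * ∫⁻ x, f x ∂μ := by
  set S : Set ι := {i | t < (∫⁻ y in B i, f y ∂μ) / μ (B i)} with hS
  have hset : {x | t < MB B μ f x} = ⋃ i : S, B i := by
    ext x
    simp only [Set.mem_ofPred_eq, MB_lt_iff, Set.mem_iUnion]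
    constructor
    · rintro ⟨i, hi, h⟩; exact ⟨⟨i, h⟩, hi⟩
    · rintro ⟨⟨i, h⟩, hi⟩; exact ⟨i, hi, h⟩
  have hfin : ∀ F : Finset S, t * μ (⋃ i ∈ F, B (i : ι)) ≤ D * ∫⁻ x, f x ∂μ := by
    intro F
    obtain ⟨R, hR⟩ : ∃ R, ∀ a ∈ F, δ (a : ι) ≤ R := by
      obtain ⟨R, hR⟩ := (F.image fun a : S => δ (a : ι)).bddAbove
      exact ⟨R, fun a ha => hR (Finset.mem_coe.2 (Finset.mem_image_of_mem _ ha))⟩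
    obtain ⟨u, hut, hdis, hcov⟩ := Vitali.exists_disjoint_subfamily_covering_enlargement
      (fun i : S => B (i : ι)) (F : Set S) (fun i => δ i) 2 (by norm_num)
      (fun a _ => hδ a) R (fun a ha => hR a ha) (fun a _ => hne a)
    have hufin : u.Finite := F.finite_toSet.subset hut
    have hsub : (⋃ i ∈ F, B (i : ι)) ⊆ ⋃ i ∈ u, E (i : ι) := by
      intro x hx
      simp only [Set.mem_iUnion] at hx ⊢
      obtain ⟨a, ha, hx⟩ := hx
      obtain ⟨b, hb, h1, h2⟩ := hcov a ha
      exact ⟨b, hb, hE _ _ h1 h2 hx⟩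
    calc t * μ (⋃ i ∈ F, B (i : ι)) ≤ t * μ (⋃ i ∈ u, E (i : ι)) := by gcongr
      _ ≤ t * ∑' i : u, μ (E (i : S)) := by
          gcongr
          exact measure_biUnion_le μ hufin.countable _
      _ ≤ t * ∑' i : u, D * μ (B (i : S)) := by
          gcongr with i
          exact hD _
      _ = D * ∑' i : u, t * μ (B (i : S)) := by
          rw [ENNReal.tsum_mul_left, ENNReal.tsum_mul_left]; ring
      _ ≤ D * ∑' i : u, ∫⁻ y in B (i : S), f y ∂μ := by
          gcongr with i
          have := (i : S).2
          exact ENNReal.mul_le_of_le_div (le_of_lt this)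
      _ = D * ∫⁻ y in ⋃ i ∈ u, B (i : S), f y ∂μ := by
          rw [lintegral_biUnion hufin.countable (fun i _ => hB _) hdis]
      _ ≤ D * ∫⁻ x, f x ∂μ := by
          gcongr
          exact Measure.restrict_le_self
  have hun : (⋃ i : S, B i) = ⋃ F : Finset S, ⋃ i ∈ F, B (i : ι) :=
    Set.iUnion_eq_iUnion_finset _
  have hdir : Directed (· ⊆ ·) (fun F : Finset S => ⋃ i ∈ F, B (i : ι)) :=
    Monotone.directed_le fun F G h => Set.biUnion_subset_biUnion_left h
  rw [hset, hun, hdir.measure_iUnion, ENNReal.mul_iSup]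
  exact iSup_le hfin

lemma rpow_layer (b : ℝ) (hb : 0 < b) (y : ℝ≥0∞) :
    ∫⁻ t in Set.Ioi (0 : ℝ), (if ENNReal.ofReal t < y then ENNReal.ofReal (t ^ (b - 1)) else 0)
      = y ^ b / ENNReal.ofReal b := by
  have key : ∀ z : ℝ, 0 ≤ z → ∫⁻ t in Set.Ioi (0 : ℝ),
      (if ENNReal.ofReal t < ENNReal.ofReal z then ENNReal.ofReal (t ^ (b - 1)) else 0)
      = ENNReal.ofReal z ^ b / ENNReal.ofReal b := by
    intro z hz
    have h1 : ∫⁻ t in Set.Ioi (0 : ℝ),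
      (if ENNReal.ofReal t < ENNReal.ofReal z then ENNReal.ofReal (t ^ (b - 1)) else 0)
      = ∫⁻ t in Set.Ioo (0 : ℝ) z, ENNReal.ofReal (t ^ (b - 1)) := by
      rw [← lintegral_indicator measurableSet_Ioi, ← lintegral_indicator measurableSet_Ioo]
      congr 1
      ext t
      by_cases h0 : 0 < t
      · have : ENNReal.ofReal t < ENNReal.ofReal z ↔ t < z :=
          ENNReal.ofReal_lt_ofReal_iff_of_nonneg h0.le
        by_cases h2 : t < z <;> simp [Set.indicator, h0, h2, this]
      · simp [Set.indicator, h0]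
    have hIntv : IntervalIntegrable (fun t : ℝ => t ^ (b - 1)) volume 0 z :=
      intervalIntegral.intervalIntegrable_rpow' (by linarith)
    rw [h1, restrict_Ioo_eq_restrict_Ioc, ← ofReal_integral_eq_lintegral_ofReal
      ((intervalIntegrable_iff_integrableOn_Ioc_of_le hz).1 hIntv), ← intervalIntegral.integral_of_le hz,
      integral_rpow (Or.inl (by linarith)), ENNReal.ofReal_rpow_of_nonneg hz hb.le,
      ← ENNReal.ofReal_div_of_pos hb]
    · simp [Real.zero_rpow hb.ne']
    · filter_upwards [ae_restrict_mem measurableSet_Ioc] with t ht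
      exact Real.rpow_nonneg ht.1.le _
  by_cases hy : y = ∞
  · subst hy
    rw [ENNReal.top_rpow_of_pos hb, ENNReal.top_div_of_ne_top ENNReal.ofReal_ne_top]
    refine ENNReal.eq_top_of_forall_nnreal_le fun r => ?_
    have hz : 0 ≤ ((r : ℝ) * b) ^ (1 / b) := by positivity
    have := key _ hz
    rw [ENNReal.ofReal_rpow_of_nonneg hz hb.le, ← Real.rpow_mul (by positivity),
      one_div_mul_cancel hb.ne', Real.rpow_one, ← ENNReal.ofReal_div_of_pos hb,
      mul_div_cancel_right₀ _ hb.ne', ENNReal.ofReal_coe_nnreal] at this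
    rw [← this]
    refine lintegral_mono fun t => ?_
    simp only [ENNReal.ofReal_lt_top, if_true]
    split_ifs <;> simp
  · have := key y.toReal ENNReal.toReal_nonneg
    rwa [ENNReal.ofReal_toReal hy] at this

lemma MB_strong [Countable ι] [SFinite μ] (E : ι → Set α) (δ : ι → ℝ)
    (hB : ∀ i, MeasurableSet (B i)) (hpos : ∀ i, μ (B i) ≠ 0) (hfin : ∀ i, μ (B i) ≠ ∞)
    (hδ : ∀ i, 0 ≤ δ i) (hne : ∀ i, (B i).Nonempty)
    (hE : ∀ a b, (B a ∩ B b).Nonempty → δ a ≤ 2 * δ b → B a ⊆ E b)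
    (D : ℝ≥0∞) (hDt : D ≠ ∞) (hD : ∀ i, μ (E i) ≤ D * μ (B i)) (a : ℝ) (ha : 1 < a) :
    ∃ C : ℝ≥0∞, C ≠ ∞ ∧ ∀ f : α → ℝ≥0∞, Measurable f →
      ∫⁻ x, (MB B μ f x) ^ a ∂μ ≤ C * ∫⁻ x, f x ^ a ∂μ := by
  refine ⟨2 ^ a * (ENNReal.ofReal a * (D * (ENNReal.ofReal (a - 1))⁻¹)), ?_, ?_⟩
  · refine ENNReal.mul_ne_top (ENNReal.rpow_ne_top_of_nonneg (by linarith) (by simp))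
      (ENNReal.mul_ne_top ENNReal.ofReal_ne_top (ENNReal.mul_ne_top hDt ?_))
    simp [ha]
  intro f hf
  have hMm : Measurable (MB B μ f) := MB_measurable hB f
  -- truncated weak type bound
  have hweak : ∀ t : ℝ≥0∞, t * μ {x | t < MB B μ f x / 2} ≤
      D * ∫⁻ x, (if t < f x then f x else 0) ∂μ := by
    intro t
    refine le_trans ?_ (MB_weak (B := B) E δ hB hδ hne hE D hD (fun x => if t < f x then f x else 0) t)
    refine mul_le_mul_right (measure_mono fun x hx => ?_) _
    have hx : t < MB B μ f x / 2 := hx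
    change t < MB B μ _ x
    by_contra hcon
    push Not at hcon
    have h2 : MB B μ f x ≤ MB B μ (fun x => if t < f x then f x else 0) x + t := by
      refine MB_le fun i hi => ?_
      calc (∫⁻ y in B i, f y ∂μ) / μ (B i)
          ≤ (∫⁻ y in B i, ((if t < f y then f y else 0) + t) ∂μ) / μ (B i) := by
            gcongr with y
            split_ifs with h
            · exact le_self_add
            · simpa using h
        _ = (∫⁻ y in B i, (if t < f y then f y else 0) ∂μ) / μ (B i) + t := by
            rw [lintegral_add_right _ measurable_const, lintegral_const, ENNReal.add_div]
            congr 1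
            simp only [Measure.restrict_apply MeasurableSet.univ, Set.univ_inter]
            exact ENNReal.mul_div_cancel_right (hpos i) (hfin i)
        _ ≤ _ := by gcongr; exact MB_le_of_mem hi
    have h3 : MB B μ f x ≤ t + t := h2.trans (by gcongr)
    have h4 : MB B μ f x / 2 ≤ t := by
      apply ENNReal.div_le_of_le_mul
      rwa [mul_two]
    exact absurd hx (not_lt.2 h4)
  have hmeasif : ∀ (g : α → ℝ≥0∞), Measurable g → ∀ (c : α × ℝ → ℝ≥0∞), Measurable c →
      Measurable (fun z : α × ℝ => if ENNReal.ofReal z.2 < g z.1 then c z else 0) := by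
    intro g hg c hc
    refine Measurable.ite ?_ hc measurable_const
    exact measurableSet_lt (by fun_prop) (hg.comp measurable_fst)
  have hb0 : ENNReal.ofReal a ≠ 0 := by simp; linarith
  -- layer cake
  have hlc : ∫⁻ x, (MB B μ f x) ^ a ∂μ = 2 ^ a * (ENNReal.ofReal a *
      ∫⁻ t in Set.Ioi (0 : ℝ), ENNReal.ofReal (t ^ (a - 1)) *
        μ {x | ENNReal.ofReal t < MB B μ f x / 2}) := by
    have e1 : ∀ x, (MB B μ f x) ^ a = 2 ^ a * (ENNReal.ofReal a * ∫⁻ t in Set.Ioi (0 : ℝ),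
        (if ENNReal.ofReal t < MB B μ f x / 2 then ENNReal.ofReal (t ^ (a - 1)) else 0)) := by
      intro x
      rw [rpow_layer a (by linarith), ENNReal.mul_div_cancel hb0 ENNReal.ofReal_ne_top,
        ← ENNReal.mul_rpow_of_nonneg _ _ (by linarith), ENNReal.mul_div_cancel (by simp) (by simp)]
    have hm := hmeasif (fun x => MB B μ f x / 2) (hMm.div_const 2)
      (fun z => ENNReal.ofReal (z.2 ^ (a - 1))) (by fun_prop)
    simp_rw [e1]
    rw [lintegral_const_mul' _ _ (ENNReal.rpow_ne_top_of_nonneg (by linarith) (by simp)),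
      lintegral_const_mul' _ _ ENNReal.ofReal_ne_top, lintegral_lintegral_swap hm.aemeasurable]
    congr 2
    refine lintegral_congr fun t => ?_
    have : ∀ x, (if ENNReal.ofReal t < MB B μ f x / 2 then ENNReal.ofReal (t ^ (a - 1)) else 0)
      = {x | ENNReal.ofReal t < MB B μ f x / 2}.indicator (fun _ => ENNReal.ofReal (t ^ (a - 1))) x := by
      intro x; simp [Set.indicator]
    simp_rw [this]
    rw [lintegral_indicator_const (measurableSet_lt measurable_const (hMm.div_const 2))]
  rw [hlc, mul_assoc, mul_assoc, mul_assoc]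
  gcongr
  calc ∫⁻ t in Set.Ioi (0 : ℝ), ENNReal.ofReal (t ^ (a - 1)) *
        μ {x | ENNReal.ofReal t < MB B μ f x / 2}
      ≤ ∫⁻ t in Set.Ioi (0 : ℝ), ENNReal.ofReal (t ^ (a - 1 - 1)) *
          (D * ∫⁻ x, (if ENNReal.ofReal t < f x then f x else 0) ∂μ) := by
        refine setLIntegral_mono' measurableSet_Ioi fun t ht => ?_
        have ht : 0 < t := ht
        rw [Real.rpow_sub_one ht.ne' (a - 1), div_eq_mul_inv,
          ENNReal.ofReal_mul (by positivity), mul_assoc]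
        gcongr
        refine le_trans ?_ (mul_le_mul_right (hweak _) _)
        rw [← mul_assoc, ← ENNReal.ofReal_mul (by positivity), inv_mul_cancel₀ ht.ne']
        simp
    _ = D * ∫⁻ t in Set.Ioi (0 : ℝ), ∫⁻ x,
          (if ENNReal.ofReal t < f x then ENNReal.ofReal (t ^ (a - 1 - 1)) * f x else 0) ∂μ := by
        rw [← lintegral_const_mul' _ _ hDt]
        refine lintegral_congr fun t => ?_
        rw [mul_left_comm, ← lintegral_const_mul' _ _ ENNReal.ofReal_ne_top]
        simp only [mul_ite, mul_zero]
    _ = D * ∫⁻ x, (∫⁻ t in Set.Ioi (0 : ℝ),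
          (if ENNReal.ofReal t < f x then ENNReal.ofReal (t ^ (a - 1 - 1)) * f x else 0)) ∂μ := by
        congr 1
        refine (lintegral_lintegral_swap ?_).symm
        exact (hmeasif f hf (fun z => ENNReal.ofReal (z.2 ^ (a - 1 - 1)) * f z.1)
          (by fun_prop)).aemeasurable
    _ = D * ∫⁻ x, (ENNReal.ofReal (a - 1))⁻¹ * f x ^ a ∂μ := by
        congr 1
        refine lintegral_congr fun x => ?_
        have : ∀ t : ℝ, (if ENNReal.ofReal t < f x then ENNReal.ofReal (t ^ (a - 1 - 1)) * f x else 0)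
          = (if ENNReal.ofReal t < f x then ENNReal.ofReal (t ^ (a - 1 - 1)) else 0) * f x := by
          intro t; split_ifs <;> simp
        simp_rw [this]
        rw [lintegral_mul_const _ ?_, rpow_layer (a - 1) (by linarith), div_eq_mul_inv,
          mul_comm (f x ^ (a - 1)), mul_assoc]
        · congr 1
          conv_lhs => rw [← ENNReal.rpow_one (f x), ← ENNReal.rpow_mul,
            ← ENNReal.rpow_add_of_nonneg _ _ (by linarith) (by linarith)]
          congr 1; ring
        · exact Measurable.ite (measurableSet_lt (by fun_prop) measurable_const) (by fun_prop)
            measurable_const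
    _ = _ := by
        rw [lintegral_const_mul _ (hf.pow_const a)]

end MBsec

/-! ### Cubes -/

/-- The half-open cube with lower corner `a` and side length `l`. -/
def cube (a : Fin n → ℝ) (l : ℝ) : Set (Fin n → ℝ) := {x | ∀ i, a i ≤ x i ∧ x i < a i + l}

lemma cube_eq (a : Fin n → ℝ) (l : ℝ) :
    cube a l = Set.pi Set.univ (fun i => Set.Ico (a i) (a i + l)) := by
  ext x; simp [cube]

lemma cube_meas (a : Fin n → ℝ) (l : ℝ) : MeasurableSet (cube a l) := by
  rw [cube_eq]; exact MeasurableSet.univ_pi fun i => measurableSet_Ico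

lemma cube_vol (a : Fin n → ℝ) (l : ℝ) : volume (cube a l) = ENNReal.ofReal l ^ n := by
  rw [cube_eq, Real.volume_pi_Ico]; simp

lemma cube_isCube (a : Fin n → ℝ) {l : ℝ} (hl : 0 < l) : IsCube (cube a l) := ⟨a, l, hl, rfl⟩

lemma IsCube.meas {Q : Set (Fin n → ℝ)} (h : IsCube Q) : MeasurableSet Q := by
  obtain ⟨a, l, hl, rfl⟩ := h; exact cube_meas a l

lemma IsCube.vol_ne_zero {Q : Set (Fin n → ℝ)} (h : IsCube Q) : volume Q ≠ 0 := by
  obtain ⟨a, l, hl, rfl⟩ := h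
  have := cube_vol a l
  unfold cube at this
  rw [this]; simp [hl]

lemma IsCube.vol_ne_top {Q : Set (Fin n → ℝ)} (h : IsCube Q) : volume Q ≠ ∞ := by
  obtain ⟨a, l, hl, rfl⟩ := h
  have := cube_vol a l
  unfold cube at this
  rw [this]; simp

/-- Indices of rational cubes. -/
abbrev RI (n : ℕ) := (Fin n → ℚ) × {l : ℚ // 0 < l}

/-- Rational cubes. -/
def RQ (i : RI n) : Set (Fin n → ℝ) := cube (fun j => (i.1 j : ℝ)) ((i.2 : ℚ) : ℝ)

/-- Enlarged rational cubes. -/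
def RE (i : RI n) : Set (Fin n → ℝ) :=
  cube (fun j => (i.1 j : ℝ) - 2 * ((i.2 : ℚ) : ℝ)) (5 * ((i.2 : ℚ) : ℝ))

lemma RI_pos (i : RI n) : (0 : ℝ) < ((i.2 : ℚ) : ℝ) := by exact_mod_cast i.2.2

lemma RQ_isCube (i : RI n) : IsCube (RQ i) := cube_isCube _ (RI_pos i)

lemma RE_isCube (i : RI n) : IsCube (RE i) := cube_isCube _ (by have := RI_pos i; linarith)

lemma RQ_nonempty (i : RI n) : (RQ i).Nonempty :=
  ⟨fun j => (i.1 j : ℝ), fun j => ⟨le_rfl, by have := RI_pos i; simp only; linarith⟩⟩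

lemma RQ_sub_RE (i : RI n) : RQ i ⊆ RE i := by
  intro x hx j
  have := hx j
  have := RI_pos i
  constructor <;> simp only <;> linarith

lemma RE_vol (i : RI n) : volume (RE i) = 5 ^ n * volume (RQ i) := by
  unfold RE RQ
  rw [cube_vol, cube_vol, ENNReal.ofReal_mul (by norm_num), mul_pow]; simp

lemma RQ_cover (i j : RI n) (h : (RQ i ∩ RQ j).Nonempty)
    (hl : ((i.2 : ℚ) : ℝ) ≤ 2 * ((j.2 : ℚ) : ℝ)) : RQ i ⊆ RE j := by
  obtain ⟨y, hy1, hy2⟩ := h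
  intro x hx k
  have h1 := hx k
  have h2 := hy1 k
  have h3 := hy2 k
  simp only at h1 h2 h3 ⊢
  constructor <;> linarith

lemma IsCube.exists_RQ {Q : Set (Fin n → ℝ)} (h : IsCube Q) :
    ∃ i : RI n, Q ⊆ RQ i ∧ volume (RQ i) ≤ 4 ^ n * volume Q := by
  obtain ⟨a, l, hl, rfl⟩ := h
  choose b hb using fun j => exists_rat_btwn (show a j - l < a j by linarith)
  obtain ⟨m, hm1, hm2⟩ := exists_rat_btwn (show 2 * l < 4 * l by linarith)
  have hm0 : (0 : ℚ) < m := by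
    have : (0 : ℝ) < m := by linarith
    exact_mod_cast this
  refine ⟨⟨b, ⟨m, hm0⟩⟩, ?_, ?_⟩
  · intro x hx j
    have h1 := hx j
    have h2 := hb j
    simp only
    constructor <;> linarith
  · have := cube_vol a l
    unfold cube at this
    unfold RQ
    rw [cube_vol, this, ← mul_pow]
    gcongr
    rw [show (4 : ℝ≥0∞) = ENNReal.ofReal 4 by simp, ← ENNReal.ofReal_mul (by norm_num)]
    exact ENNReal.ofReal_le_ofReal hm2.le

/-! ### Muckenhoupt pairs -/

/-- A weight `W` in `A_{r+1}` together with its dual weight `S`. -/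
structure APair (r : ℝ) (K : ℝ≥0∞) (W S : (Fin n → ℝ) → ℝ≥0∞) : Prop where
  hr : 0 < r
  Kt : K ≠ ∞
  mW : Measurable W
  W0 : ∀ x, W x ≠ 0
  Wt : ∀ x, W x ≠ ∞
  hS : ∀ x, S x = W x ^ (-(1 / r))
  fW : ∀ Q, IsCube Q → ∫⁻ x in Q, W x ≠ ∞
  fS : ∀ Q, IsCube Q → ∫⁻ x in Q, S x ≠ ∞
  hK : ∀ Q, IsCube Q → (∫⁻ x in Q, W x) * (∫⁻ x in Q, S x) ^ r ≤ K * volume Q ^ (r + 1)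

namespace APair

variable {r : ℝ} {K : ℝ≥0∞} {W S : (Fin n → ℝ) → ℝ≥0∞}

lemma S0 (h : APair r K W S) (x) : S x ≠ 0 := by
  rw [h.hS]; exact (ENNReal.rpow_pos (pos_iff_ne_zero.2 (h.W0 x)) (h.Wt x)).ne'

lemma St (h : APair r K W S) (x) : S x ≠ ∞ := by
  rw [h.hS]; exact ENNReal.rpow_ne_top_of_ne_zero (h.W0 x) (h.Wt x)

lemma mS (h : APair r K W S) : Measurable S := by
  have : S = fun x => W x ^ (-(1 / r)) := funext h.hS
  rw [this]; exact h.mW.pow_const _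

lemma symm (h : APair r K W S) : APair (1 / r) (K ^ (1 / r)) S W where
  hr := one_div_pos.2 h.hr
  Kt := ENNReal.rpow_ne_top_of_nonneg (one_div_pos.2 h.hr).le h.Kt
  mW := h.mS
  W0 := h.S0
  Wt := h.St
  hS x := by
    have := h.hr.ne'
    rw [h.hS, ← ENNReal.rpow_mul]
    conv_lhs => rw [← ENNReal.rpow_one (W x)]
    congr 1; field_simp
  fW := h.fS
  fS := h.fW
  hK Q hQ := by
    have h0 := h.hr.ne'
    have h1 : 0 ≤ 1 / r := (one_div_pos.2 h.hr).le
    have := ENNReal.rpow_le_rpow (h.hK Q hQ) h1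
    rw [ENNReal.mul_rpow_of_nonneg _ _ h1, ENNReal.mul_rpow_of_nonneg _ _ h1, ← ENNReal.rpow_mul,
      ← ENNReal.rpow_mul, mul_one_div_cancel h0, ENNReal.rpow_one, mul_comm] at this
    convert this using 3
    field_simp; ring

end APair

lemma holder_cube (r : ℝ) (hr : 0 < r) (W S : (Fin n → ℝ) → ℝ≥0∞) (hW : Measurable W)
    (W0 : ∀ x, W x ≠ 0) (Wt : ∀ x, W x ≠ ∞) (hS : ∀ x, S x = W x ^ (-(1 / r)))
    (Q : Set (Fin n → ℝ)) :
    volume Q ^ (r + 1) ≤ (∫⁻ x in Q, W x) * (∫⁻ x in Q, S x) ^ r := by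
  have hpq : (r + 1).HolderConjugate ((r + 1) / r) := by
    rw [Real.holderConjugate_iff]
    refine ⟨by linarith, ?_⟩
    field_simp
    ring
  have h1 := ENNReal.lintegral_mul_le_Lp_mul_Lq (volume.restrict Q) hpq
    (f := fun x => W x ^ (1 / (r + 1))) (g := fun x => W x ^ (-(1 / (r + 1))))
    (hW.pow_const _).aemeasurable (hW.pow_const _).aemeasurable
  have e0 : ∀ x, ((fun x => W x ^ (1 / (r + 1))) * (fun x => W x ^ (-(1 / (r + 1))))) x = 1 := by
    intro x
    simp only [Pi.mul_apply]
    rw [← ENNReal.rpow_add _ _ (W0 x) (Wt x)]; simp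
  have e1 : ∀ x, (W x ^ (1 / (r + 1))) ^ (r + 1) = W x := by
    intro x
    rw [← ENNReal.rpow_mul, one_div_mul_cancel (by linarith), ENNReal.rpow_one]
  have e2 : ∀ x, (W x ^ (-(1 / (r + 1)))) ^ ((r + 1) / r) = S x := by
    intro x
    rw [← ENNReal.rpow_mul, hS]
    congr 1
    field_simp
  simp_rw [e0, e1, e2] at h1
  have h2 := ENNReal.rpow_le_rpow h1 (show 0 ≤ r + 1 by linarith)
  rw [ENNReal.mul_rpow_of_nonneg _ _ (by linarith), ← ENNReal.rpow_mul, ← ENNReal.rpow_mul,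
    one_div_mul_cancel (by linarith), ENNReal.rpow_one] at h2
  have e3 : 1 / ((r + 1) / r) * (r + 1) = r := by field_simp
  rw [e3] at h2
  simpa using h2

namespace APair

variable {r : ℝ} {K : ℝ≥0∞} {W S : (Fin n → ℝ) → ℝ≥0∞}

lemma posW (h : APair r K W S) {Q : Set (Fin n → ℝ)} (hQ : IsCube Q) : ∫⁻ x in Q, W x ≠ 0 := by
  intro h0
  rw [lintegral_eq_zero_iff h.mW] at h0
  have : volume.restrict Q = 0 := by
    rw [← ae_eq_bot, ← Filter.eventually_false_iff_eq_bot]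
    filter_upwards [h0] with x hx using h.W0 x hx
  exact hQ.vol_ne_zero (by simpa using this)

lemma doubling (h : APair r K W S) (i : RI n) :
    ∫⁻ x in RE i, W x ≤ (K * (5 ^ n) ^ (r + 1)) * ∫⁻ x in RQ i, W x := by
  have hQ := RQ_isCube i
  have hQ' := RE_isCube i
  have hr := h.hr
  have h1 := holder_cube r h.hr W S h.mW h.W0 h.Wt h.hS (RQ i)
  have h2 := h.hK _ hQ'
  have h3 : ∫⁻ x in RQ i, S x ≤ ∫⁻ x in RE i, S x := lintegral_mono_set (RQ_sub_RE i)
  have v0 : volume (RQ i) ^ (r + 1) ≠ 0 :=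
    (ENNReal.rpow_pos (pos_iff_ne_zero.2 hQ.vol_ne_zero) hQ.vol_ne_top).ne'
  have vt : volume (RQ i) ^ (r + 1) ≠ ∞ :=
    ENNReal.rpow_ne_top_of_nonneg (by linarith) hQ.vol_ne_top
  refine (ENNReal.mul_le_mul_iff_right v0 vt).1 ?_
  calc volume (RQ i) ^ (r + 1) * ∫⁻ x in RE i, W x
      ≤ ((∫⁻ x in RQ i, W x) * (∫⁻ x in RE i, S x) ^ r) * ∫⁻ x in RE i, W x := by
        gcongr
        refine h1.trans ?_
        gcongr
    _ = (∫⁻ x in RQ i, W x) * ((∫⁻ x in RE i, W x) * (∫⁻ x in RE i, S x) ^ r) := by ring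
    _ ≤ (∫⁻ x in RQ i, W x) * (K * volume (RE i) ^ (r + 1)) := by gcongr
    _ = _ := by
        rw [RE_vol, ENNReal.mul_rpow_of_nonneg _ _ (by linarith)]; ring

/-- Bound for the maximal function with respect to the measure `W dx`. -/
lemma maxW (h : APair r K W S) (a : ℝ) (ha : 1 < a) :
    ∃ C : ℝ≥0∞, C ≠ ∞ ∧ ∀ f : (Fin n → ℝ) → ℝ≥0∞, Measurable f →
      ∫⁻ x, (MB RQ (volume.withDensity W) f x) ^ a * W x ≤ C * ∫⁻ x, f x ^ a * W x := by
  have hμ : ∀ Q, IsCube Q → volume.withDensity W Q = ∫⁻ x in Q, W x :=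
    fun Q hQ => withDensity_apply _ hQ.meas
  have hD : K * (5 ^ n) ^ (r + 1) ≠ ∞ := ENNReal.mul_ne_top h.Kt
    (ENNReal.rpow_ne_top_of_nonneg (by have := h.hr; linarith) (by simp))
  obtain ⟨C, hC, hb⟩ := MB_strong (B := RQ (n := n)) (μ := volume.withDensity W) RE
    (fun i => ((i.2 : ℚ) : ℝ))
    (fun i => (RQ_isCube i).meas) (fun i => by rw [hμ _ (RQ_isCube i)]; exact h.posW (RQ_isCube i))
    (fun i => by rw [hμ _ (RQ_isCube i)]; exact h.fW _ (RQ_isCube i))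
    (fun i => (RI_pos i).le) RQ_nonempty RQ_cover _ hD
    (fun i => by rw [hμ _ (RQ_isCube i), hμ _ (RE_isCube i)]; exact h.doubling i) a ha
  refine ⟨C, hC, fun f hf => ?_⟩
  have := hb f hf
  have hm : Measurable (MB RQ (volume.withDensity W) f) :=
    MB_measurable (fun i => (RQ_isCube i).meas) f
  rw [lintegral_withDensity_eq_lintegral_mul _ h.mW (hm.pow_const a),
    lintegral_withDensity_eq_lintegral_mul _ h.mW (hf.pow_const a)] at this
  simpa [mul_comm] using this

lemma alg_aux (r : ℝ) (hr : 0 < r) (v s w K A : ℝ≥0∞) (v0 : v ≠ 0) (vt : v ≠ ∞) (s0 : s ≠ 0)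
    (st : s ≠ ∞) (w0 : w ≠ 0) (wt : w ≠ ∞) (h : w * s ^ r ≤ K * v ^ (r + 1)) :
    (A / v) ^ r ≤ K * (v * (A / s) ^ r / w) := by
  rw [ENNReal.div_rpow_of_nonneg _ _ hr.le, ENNReal.div_rpow_of_nonneg _ _ hr.le]
  rw [ENNReal.rpow_add _ _ v0 vt, ENNReal.rpow_one] at h
  have V0 : v ^ r ≠ 0 := (ENNReal.rpow_pos (pos_iff_ne_zero.2 v0) vt).ne'
  have Vt : v ^ r ≠ ∞ := ENNReal.rpow_ne_top_of_nonneg hr.le vt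
  have S0 : s ^ r ≠ 0 := (ENNReal.rpow_pos (pos_iff_ne_zero.2 s0) st).ne'
  have St : s ^ r ≠ ∞ := ENNReal.rpow_ne_top_of_nonneg hr.le st
  simp only [div_eq_mul_inv]
  calc A ^ r * (v ^ r)⁻¹
      = A ^ r * (v ^ r)⁻¹ * (w * w⁻¹) * (s ^ r * (s ^ r)⁻¹) := by
        rw [ENNReal.mul_inv_cancel w0 wt, ENNReal.mul_inv_cancel S0 St]; simp
    _ = A ^ r * (v ^ r)⁻¹ * w⁻¹ * (s ^ r)⁻¹ * (w * s ^ r) := by ring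
    _ ≤ A ^ r * (v ^ r)⁻¹ * w⁻¹ * (s ^ r)⁻¹ * (K * (v ^ r * v)) := by gcongr
    _ = K * (v * (A ^ r * (s ^ r)⁻¹) * w⁻¹) * (v ^ r * (v ^ r)⁻¹) := by ring
    _ = _ := by rw [ENNReal.mul_inv_cancel V0 Vt, mul_one]

/-- Pointwise bound of the maximal function by weighted maximal functions. -/
lemma pointwise (h : APair r K W S) (f : (Fin n → ℝ) → ℝ≥0∞) (hf : Measurable f) (x) :
    (MB RQ volume f x) ^ r ≤ K * MB RQ (volume.withDensity W)
      (fun y => MB RQ (volume.withDensity S) (fun z => f z / S z) y ^ r / W y) x := by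
  have hr := h.hr
  rw [← ENNReal.le_rpow_inv_iff hr]
  refine MB_le fun i hi => ?_
  rw [ENNReal.le_rpow_inv_iff hr]
  have hQ := RQ_isCube i
  have hμW : volume.withDensity W (RQ i) = ∫⁻ x in RQ i, W x := withDensity_apply _ hQ.meas
  have hμS : volume.withDensity S (RQ i) = ∫⁻ x in RQ i, S x := withDensity_apply _ hQ.meas
  set N := MB RQ (volume.withDensity S) (fun z => f z / S z) with hN
  have hNm : Measurable N := MB_measurable (fun i => (RQ_isCube i).meas) _
  have hA : ∫⁻ y in RQ i, f y / S y ∂(volume.withDensity S) = ∫⁻ y in RQ i, f y := by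
    rw [restrict_withDensity hQ.meas,
      lintegral_withDensity_eq_lintegral_mul _ h.mS
        (show Measurable (fun y => f y / S y) from hf.div h.mS)]
    refine lintegral_congr fun y => ?_
    simp only [Pi.mul_apply]
    exact ENNReal.mul_div_cancel (h.S0 y) (h.St y)
  have hB : ∫⁻ y in RQ i, N y ^ r / W y ∂(volume.withDensity W) = ∫⁻ y in RQ i, N y ^ r := by
    rw [restrict_withDensity hQ.meas,
      lintegral_withDensity_eq_lintegral_mul _ h.mW
        (show Measurable (fun y => N y ^ r / W y) from (hNm.pow_const r).div h.mW)]
    refine lintegral_congr fun y => ?_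
    simp only [Pi.mul_apply]
    exact ENNReal.mul_div_cancel (h.W0 y) (h.Wt y)
  have h1 : ∀ y ∈ RQ i, (∫⁻ y in RQ i, f y) / (∫⁻ y in RQ i, S y) ≤ N y := by
    intro y hy
    have := MB_le_of_mem (B := RQ) (μ := volume.withDensity S) (f := fun z => f z / S z) hy
    rwa [hA, hμS] at this
  have h2 : volume (RQ i) * ((∫⁻ y in RQ i, f y) / (∫⁻ y in RQ i, S y)) ^ r ≤
      ∫⁻ y in RQ i, N y ^ r := by
    rw [mul_comm, ← setLIntegral_const]
    refine setLIntegral_mono' hQ.meas fun y hy => ?_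
    exact ENNReal.rpow_le_rpow (h1 y hy) hr.le
  refine (alg_aux r hr _ _ _ K _ hQ.vol_ne_zero hQ.vol_ne_top (h.symm.posW hQ) (h.fS _ hQ)
    (h.posW hQ) (h.fW _ hQ) (h.hK _ hQ)).trans ?_
  gcongr
  have := MB_le_of_mem (B := RQ) (μ := volume.withDensity W) (f := fun y => N y ^ r / W y) hi
  rw [hB, hμW] at this
  refine le_trans ?_ this
  gcongr

/-- The Muckenhoupt theorem. -/
lemma muckenhoupt (h : APair r K W S) :
    ∃ C : ℝ≥0∞, C ≠ ∞ ∧ ∀ f : (Fin n → ℝ) → ℝ≥0∞, Measurable f →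
      ∫⁻ x, (MB RQ volume f x) ^ (r + 1) * W x ≤ C * ∫⁻ x, f x ^ (r + 1) * W x := by
  have hr := h.hr
  have ha : 1 < (r + 1) / r := by rw [one_lt_div hr]; linarith
  have ha0 : 0 ≤ (r + 1) / r := by positivity
  obtain ⟨C1, hC1, hb1⟩ := h.maxW ((r + 1) / r) ha
  obtain ⟨C2, hC2, hb2⟩ := h.symm.maxW (r + 1) (by linarith)
  have hKt : K ^ ((r + 1) / r) ≠ ∞ := ENNReal.rpow_ne_top_of_nonneg ha0 h.Kt
  refine ⟨K ^ ((r + 1) / r) * (C1 * C2), ENNReal.mul_ne_top hKt (ENNReal.mul_ne_top hC1 hC2), ?_⟩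
  intro f hf
  set N := MB RQ (volume.withDensity S) (fun z => f z / S z) with hN
  have hNm : Measurable N := MB_measurable (fun i => (RQ_isCube i).meas) _
  calc ∫⁻ x, (MB RQ volume f x) ^ (r + 1) * W x
      ≤ ∫⁻ x, K ^ ((r + 1) / r) *
          ((MB RQ (volume.withDensity W) (fun y => N y ^ r / W y) x) ^ ((r + 1) / r) * W x) := by
        refine lintegral_mono fun x => ?_
        rw [← mul_assoc]
        gcongr
        rw [← ENNReal.mul_rpow_of_nonneg _ _ ha0]
        have := ENNReal.rpow_le_rpow (h.pointwise f hf x) ha0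
        rw [← ENNReal.rpow_mul, mul_div_cancel₀ _ hr.ne'] at this
        exact this
    _ = K ^ ((r + 1) / r) * ∫⁻ x,
          ((MB RQ (volume.withDensity W) (fun y => N y ^ r / W y) x) ^ ((r + 1) / r) * W x) :=
        lintegral_const_mul' _ _ hKt
    _ ≤ K ^ ((r + 1) / r) * (C1 * ∫⁻ x, (N x ^ r / W x) ^ ((r + 1) / r) * W x) := by
        gcongr
        exact hb1 _ ((hNm.pow_const r).div h.mW)
    _ = K ^ ((r + 1) / r) * (C1 * ∫⁻ x, N x ^ (r + 1) * S x) := by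
        congr 2
        refine lintegral_congr fun x => ?_
        rw [ENNReal.div_rpow_of_nonneg _ _ ha0, ← ENNReal.rpow_mul, mul_div_cancel₀ _ hr.ne',
          div_eq_mul_inv, mul_assoc, ← ENNReal.rpow_neg]
        congr 1
        conv_lhs => rw [← ENNReal.rpow_one (W x), ← ENNReal.rpow_mul,
          ← ENNReal.rpow_add _ _ (h.W0 x) (h.Wt x)]
        rw [h.hS]
        congr 1
        field_simp; ring
    _ ≤ K ^ ((r + 1) / r) * (C1 * (C2 * ∫⁻ x, (f x / S x) ^ (r + 1) * S x)) := by
        gcongr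
        exact hb2 _ (hf.div h.mS)
    _ = K ^ ((r + 1) / r) * (C1 * C2) * ∫⁻ x, f x ^ (r + 1) * W x := by
        rw [mul_assoc, mul_assoc]
        congr 3
        refine lintegral_congr fun x => ?_
        rw [ENNReal.div_rpow_of_nonneg _ _ (by linarith), div_eq_mul_inv, mul_assoc,
          ← ENNReal.rpow_neg]
        congr 1
        conv_lhs => rw [← ENNReal.rpow_one (S x), ← ENNReal.rpow_mul,
          ← ENNReal.rpow_add _ _ (h.S0 x) (h.St x)]
        rw [h.symm.hS x]
        congr 1
        field_simp; ring

end APair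


/-! ### Rubio de Francia iteration -/

lemma fixpoint {α : Type*} [MeasurableSpace α] (μ : Measure α)
    (T : (α → ℝ≥0∞) → α → ℝ≥0∞) (hTm : ∀ f, Measurable f → Measurable (T f))
    (hmono : Monotone T)
    (hsup : ∀ f : ℕ → α → ℝ≥0∞, (∀ k, Measurable (f k)) → Monotone f →
      ∀ x, T (fun y => ⨆ k, f k y) x ≤ ⨆ k, T (f k) x)
    (p : ℝ) (hp : 0 < p) (C : ℝ≥0∞) (hC : C ≠ ∞)
    (hT : ∀ f, Measurable f → ∫⁻ x, T f x ^ p ∂μ ≤ C * ∫⁻ x, f x ^ p ∂μ)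
    (f : α → ℝ≥0∞) (hf : Measurable f) (hfi : ∫⁻ x, f x ^ p ∂μ ≠ ∞) :
    ∃ η : α → ℝ≥0∞, Measurable η ∧ f ≤ η ∧ ∫⁻ x, η x ^ p ∂μ ≠ ∞ ∧
      ∃ A : ℝ≥0∞, A ≠ ∞ ∧ ∀ x, T η x ≤ A * η x := by
  set c : ℝ≥0∞ := ((2 * (C + 1))⁻¹) ^ (1 / p) with hc
  have hC2 : 2 * (C + 1) ≠ ∞ := ENNReal.mul_ne_top (by simp) (by simp [hC])
  have hc0 : c ≠ 0 := by
    refine (ENNReal.rpow_pos ?_ ?_).ne'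
    · exact ENNReal.inv_pos.2 hC2
    · simp
  have hct : c ≠ ∞ := ENNReal.rpow_ne_top_of_nonneg (by positivity) (by simp)
  have hcp : c ^ p * C ≤ 2⁻¹ := by
    rw [hc, ← ENNReal.rpow_mul, one_div_mul_cancel hp.ne', ENNReal.rpow_one,
      ENNReal.mul_inv (by simp) (by simp), mul_assoc]
    calc (2 : ℝ≥0∞)⁻¹ * ((C + 1)⁻¹ * C) ≤ 2⁻¹ * ((C + 1)⁻¹ * (C + 1)) := by
          gcongr; exact le_self_add
      _ ≤ 2⁻¹ * 1 := by gcongr; exact ENNReal.inv_mul_le_one _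
      _ = _ := mul_one _
  let e : ℕ → α → ℝ≥0∞ := fun k => Nat.rec f (fun _ g x => max (f x) (c * T g x)) k
  have e0 : e 0 = f := rfl
  have es : ∀ k, e (k + 1) = fun x => max (f x) (c * T (e k) x) := fun k => rfl
  have em : ∀ k, Measurable (e k) := by
    intro k
    induction k with
    | zero => exact hf
    | succ k ih => rw [es]; exact hf.max ((hTm _ ih).const_mul c)
  have emono : Monotone e := by
    refine monotone_nat_of_le_succ fun k => ?_
    induction k with
    | zero => rw [es, e0]; intro x; exact le_max_left _ _
    | succ k ih =>
      rw [es k, es (k + 1)]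
      intro x
      have := hmono ih x
      exact max_le_max le_rfl (mul_le_mul_right this _)
  have ei : ∀ k, ∫⁻ x, e k x ^ p ∂μ ≤ 2 * ∫⁻ x, f x ^ p ∂μ := by
    intro k
    induction k with
    | zero => rw [e0, two_mul]; exact le_self_add
    | succ k ih =>
      calc ∫⁻ x, e (k + 1) x ^ p ∂μ ≤ ∫⁻ x, (f x ^ p + c ^ p * T (e k) x ^ p) ∂μ := by
            refine lintegral_mono fun x => ?_
            rw [es]
            rcases le_total (f x) (c * T (e k) x) with h | h
            · simp only [max_eq_right h]
              rw [ENNReal.mul_rpow_of_nonneg _ _ hp.le]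
              exact le_add_self
            · simp only [max_eq_left h]
              exact le_self_add
        _ = ∫⁻ x, f x ^ p ∂μ + c ^ p * ∫⁻ x, T (e k) x ^ p ∂μ := by
            rw [lintegral_add_left (hf.pow_const p),
              lintegral_const_mul _ ((hTm _ (em k)).pow_const p)]
        _ ≤ ∫⁻ x, f x ^ p ∂μ + c ^ p * (C * (2 * ∫⁻ x, f x ^ p ∂μ)) := by
            gcongr
            exact (hT _ (em k)).trans (by gcongr)
        _ = ∫⁻ x, f x ^ p ∂μ + (c ^ p * C) * (2 * ∫⁻ x, f x ^ p ∂μ) := by ring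
        _ ≤ ∫⁻ x, f x ^ p ∂μ + 2⁻¹ * (2 * ∫⁻ x, f x ^ p ∂μ) := by gcongr
        _ = _ := by
            rw [← mul_assoc, ENNReal.inv_mul_cancel (by simp) (by simp), one_mul, two_mul]
  refine ⟨fun x => ⨆ k, e k x, Measurable.iSup em, fun x => le_iSup (fun k => e k x) 0, ?_,
    c⁻¹, by simpa using hc0, ?_⟩
  · have h1 : ∀ x, (⨆ k, e k x) ^ p = ⨆ k, e k x ^ p := fun x =>
      (ENNReal.orderIsoRpow p hp).map_iSup _
    simp_rw [h1]
    rw [lintegral_iSup (fun k => (em k).pow_const p)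
      (fun i j h x => ENNReal.rpow_le_rpow (emono h x) hp.le)]
    exact ne_top_of_le_ne_top (ENNReal.mul_ne_top (by simp) hfi) (iSup_le ei)
  · intro x
    rw [mul_comm, ← div_eq_mul_inv, ENNReal.le_div_iff_mul_le (Or.inl hc0) (Or.inl hct), mul_comm]
    refine (mul_le_mul_right (hsup e em emono x) c).trans ?_
    rw [ENNReal.mul_iSup]
    refine iSup_le fun k => le_trans ?_ (le_iSup _ (k + 1))
    rw [es]
    exact le_max_right _ _

/-- The `A_1` condition in usable form. -/
def IsA1 (u : (Fin n → ℝ) → ℝ≥0∞) : Prop :=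
  ∃ C : ℝ≥0∞, C ≠ ∞ ∧ ∀ Q, IsCube Q → ∀ᵐ x ∂(volume.restrict Q), eavg Q u ≤ C * u x

lemma isA1_of_MB (u v : (Fin n → ℝ) → ℝ≥0∞) (huv : u =ᵐ[volume] v) (A : ℝ≥0∞) (hA : A ≠ ∞)
    (h : ∀ x, MB RQ volume u x ≤ A * u x) : IsA1 v := by
  refine ⟨4 ^ n * A, ENNReal.mul_ne_top (by simp) hA, fun Q hQ => ?_⟩
  obtain ⟨i, hi, hv⟩ := hQ.exists_RQ
  filter_upwards [ae_restrict_of_ae huv, ae_restrict_mem hQ.meas] with x hx hxQ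
  have h1 : eavg Q v = eavg Q u := by
    unfold eavg
    rw [lintegral_congr_ae (ae_restrict_of_ae huv)]
  have hQ' := RQ_isCube i
  rw [h1, ← hx, mul_assoc]
  refine le_trans ?_ (mul_le_mul_right (h x) _)
  refine le_trans ?_ (mul_le_mul_right (MB_le_of_mem (hi hxQ)) _)
  unfold eavg
  refine ENNReal.div_le_of_le_mul ?_
  calc ∫⁻ x in Q, u x ≤ ∫⁻ x in RQ i, u x := lintegral_mono_set hi
    _ = (∫⁻ x in RQ i, u x) / volume (RQ i) * volume (RQ i) :=
        (ENNReal.div_mul_cancel hQ'.vol_ne_zero hQ'.vol_ne_top).symm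
    _ ≤ (∫⁻ x in RQ i, u x) / volume (RQ i) * (4 ^ n * volume Q) := by gcongr
    _ = _ := by ring

/-- The Jones factorization theorem. -/
lemma jones {r : ℝ} {K : ℝ≥0∞} {W S : (Fin n → ℝ) → ℝ≥0∞} (h : APair r K W S) :
    ∃ u₁ u₂ : (Fin n → ℝ) → ℝ≥0∞, Measurable u₁ ∧ Measurable u₂ ∧
      (∀ x, u₁ x ≠ 0 ∧ u₁ x ≠ ∞ ∧ u₂ x ≠ 0 ∧ u₂ x ≠ ∞) ∧
      (∀ x, W x = u₁ x * u₂ x ^ (-r)) ∧ IsA1 u₁ ∧ IsA1 u₂ := by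
  have hr := h.hr
  have hp : 0 < r + 1 := by linarith
  obtain ⟨C1, hC1, hb1⟩ := h.muckenhoupt
  obtain ⟨C2, hC2, hb2⟩ := h.symm.muckenhoupt
  let U : (Fin n → ℝ) → ℝ≥0∞ := fun x => W x ^ (1 / (r + 1))
  have hUm : Measurable U := h.mW.pow_const _
  have U0 : ∀ x, U x ≠ 0 := fun x =>
    (ENNReal.rpow_pos (pos_iff_ne_zero.2 (h.W0 x)) (h.Wt x)).ne'
  have Ut : ∀ x, U x ≠ ∞ := fun x => ENNReal.rpow_ne_top_of_ne_zero (h.W0 x) (h.Wt x)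
  have UW : ∀ x, U x ^ (r + 1) = W x := by
    intro x
    simp only [U]
    rw [← ENNReal.rpow_mul, one_div_mul_cancel hp.ne', ENNReal.rpow_one]
  have US : ∀ x, U x ^ (-((r + 1) / r)) = S x := by
    intro x
    simp only [U]
    rw [← ENNReal.rpow_mul, h.hS]
    congr 1; field_simp
  let T1 : ((Fin n → ℝ) → ℝ≥0∞) → (Fin n → ℝ) → ℝ≥0∞ :=
    fun f x => ((U x)⁻¹ * MB RQ volume (fun y => f y ^ r * U y) x) ^ (1 / r)
  let T2 : ((Fin n → ℝ) → ℝ≥0∞) → (Fin n → ℝ) → ℝ≥0∞ :=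
    fun f x => U x * MB RQ volume (fun y => f y * (U y)⁻¹) x
  have hMm : ∀ f, Measurable (MB (RQ (n := n)) volume f) :=
    fun f => MB_measurable (fun i => (RQ_isCube i).meas) _
  have hT1m : ∀ f, Measurable (T1 f) := fun f => (hUm.inv.mul (hMm _)).pow_const _
  have hT2m : ∀ f, Measurable (T2 f) := fun f => hUm.mul (hMm _)
  have hr1 : 0 < 1 / r := one_div_pos.2 hr
  have mono1 : Monotone T1 := by
    intro f g hfg x
    simp only [T1]
    gcongr
    exact MB_mono (fun y => mul_le_mul_left (ENNReal.rpow_le_rpow (hfg y) hr.le) _) x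
  have mono2 : Monotone T2 := by
    intro f g hfg x
    simp only [T2]
    gcongr
    exact MB_mono (fun y => mul_le_mul_left (hfg y) _) x
  have rsup : ∀ (q : ℝ), 0 < q → ∀ a : ℕ → ℝ≥0∞, (⨆ k, a k) ^ q = ⨆ k, a k ^ q :=
    fun q hq a => (ENNReal.orderIsoRpow q hq).map_iSup _
  have sup1 : ∀ f : ℕ → (Fin n → ℝ) → ℝ≥0∞, (∀ k, Measurable (f k)) → Monotone f →
      ∀ x, T1 (fun y => ⨆ k, f k y) x ≤ ⨆ k, T1 (f k) x := by
    intro f hf hm x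
    simp only [T1]
    rw [← rsup _ hr1, ← ENNReal.mul_iSup]
    gcongr
    have : (fun y => (⨆ k, f k y) ^ r * U y) = fun y => ⨆ k, (f k y ^ r * U y) := by
      ext y; rw [rsup _ hr, ENNReal.iSup_mul]
    rw [this]
    exact MB_iSup (f := fun k y => f k y ^ r * U y) (fun k => ((hf k).pow_const r).mul hUm)
      (fun i j hij y => mul_le_mul_left (ENNReal.rpow_le_rpow (hm hij y) hr.le) _) x
  have sup2 : ∀ f : ℕ → (Fin n → ℝ) → ℝ≥0∞, (∀ k, Measurable (f k)) → Monotone f →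
      ∀ x, T2 (fun y => ⨆ k, f k y) x ≤ ⨆ k, T2 (f k) x := by
    intro f hf hm x
    simp only [T2]
    rw [← ENNReal.mul_iSup]
    gcongr
    have : (fun y => (⨆ k, f k y) * (U y)⁻¹) = fun y => ⨆ k, (f k y * (U y)⁻¹) := by
      ext y; rw [ENNReal.iSup_mul]
    rw [this]
    exact MB_iSup (f := fun k y => f k y * (U y)⁻¹) (fun k => (hf k).mul hUm.inv)
      (fun i j hij y => mul_le_mul_left (hm hij y) _) x
  have hinv : ∀ x (q : ℝ), ((U x)⁻¹) ^ q = U x ^ (-q) := by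
    intro x q; rw [ENNReal.inv_rpow, ENNReal.rpow_neg]
  have bd1 : ∀ f, Measurable f → ∫⁻ x, T1 f x ^ (r + 1) ≤ C2 * ∫⁻ x, f x ^ (r + 1) := by
    intro f hf
    have := hb2 (fun y => f y ^ r * U y) ((hf.pow_const r).mul hUm)
    have er : 1 / r + 1 = (r + 1) / r := by field_simp; ring
    rw [er] at this
    convert this using 1
    · refine lintegral_congr fun x => ?_
      simp only [T1]
      rw [← ENNReal.rpow_mul, show 1 / r * (r + 1) = (r + 1) / r by field_simp,
        ENNReal.mul_rpow_of_nonneg _ _ (by positivity), hinv, US, mul_comm]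
    · congr 1
      refine lintegral_congr fun x => ?_
      rw [ENNReal.mul_rpow_of_nonneg _ _ (by positivity), ← ENNReal.rpow_mul,
        mul_div_cancel₀ _ hr.ne', mul_assoc, ← US, ← ENNReal.rpow_add _ _ (U0 x) (Ut x)]
      simp
  have bd2 : ∀ f, Measurable f → ∫⁻ x, T2 f x ^ (r + 1) ≤ C1 * ∫⁻ x, f x ^ (r + 1) := by
    intro f hf
    have := hb1 (fun y => f y * (U y)⁻¹) (hf.mul hUm.inv)
    convert this using 1
    · refine lintegral_congr fun x => ?_
      simp only [T2]
      rw [ENNReal.mul_rpow_of_nonneg _ _ (by positivity), UW, mul_comm]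
    · congr 1
      refine lintegral_congr fun x => ?_
      rw [ENNReal.mul_rpow_of_nonneg _ _ (by positivity), hinv, mul_assoc, ← UW,
        ← ENNReal.rpow_add _ _ (U0 x) (Ut x)]
      simp
  obtain ⟨g, gpos, gm, gi⟩ := exists_pos_lintegral_lt_of_sigmaFinite
    (volume : Measure (Fin n → ℝ)) (ε := 1) (by simp)
  let f0 : (Fin n → ℝ) → ℝ≥0∞ := fun x => (g x : ℝ≥0∞) ^ (1 / (r + 1))
  have f0m : Measurable f0 := gm.coe_nnreal_ennreal.pow_const _
  have f0i : ∫⁻ x, f0 x ^ (r + 1) ≠ ∞ := by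
    have : ∀ x, f0 x ^ (r + 1) = g x := by
      intro x
      simp only [f0]
      rw [← ENNReal.rpow_mul, one_div_mul_cancel hp.ne', ENNReal.rpow_one]
    simp_rw [this]
    exact (gi.trans (by simp)).ne
  obtain ⟨η, ηm, ηf, ηi, A, hA, hη⟩ := fixpoint (volume : Measure (Fin n → ℝ))
    (fun f x => max (T1 f x) (T2 f x)) (fun f _ => (hT1m f).max (hT2m f))
    (fun f g hfg x => max_le_max (mono1 hfg x) (mono2 hfg x))
    (fun f hf hm x => by
      refine max_le ((sup1 f hf hm x).trans ?_) ((sup2 f hf hm x).trans ?_)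
      · exact iSup_mono fun k => le_max_left _ _
      · exact iSup_mono fun k => le_max_right _ _)
    (r + 1) hp (C2 + C1) (ENNReal.add_ne_top.2 ⟨hC2, hC1⟩)
    (fun f hf => by
      calc ∫⁻ x, (max (T1 f x) (T2 f x)) ^ (r + 1)
          ≤ ∫⁻ x, (T1 f x ^ (r + 1) + T2 f x ^ (r + 1)) := by
            refine lintegral_mono fun x => ?_
            rcases le_total (T1 f x) (T2 f x) with h | h
            · simp only [max_eq_right h]; exact le_add_self
            · simp only [max_eq_left h]; exact le_self_add
        _ = (∫⁻ x, T1 f x ^ (r + 1)) + ∫⁻ x, T2 f x ^ (r + 1) :=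
            lintegral_add_left ((hT1m f).pow_const _) _
        _ ≤ _ := by
            rw [add_mul]
            exact add_le_add (bd1 f hf) (bd2 f hf))
    f0 f0m f0i
  have η0 : ∀ x, η x ≠ 0 := by
    intro x hx
    have h1 : f0 x ≤ η x := ηf x
    rw [hx] at h1
    have h2 : 0 < f0 x := ENNReal.rpow_pos (by exact_mod_cast gpos x) (by simp)
    exact absurd h1 (not_le.2 h2)
  have ηt : ∀ᵐ x, η x ≠ ∞ := by
    filter_upwards [ae_lt_top (ηm.pow_const (r + 1)) ηi] with x hx hx'
    rw [hx', ENNReal.top_rpow_of_pos hp] at hx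
    exact absurd hx (lt_irrefl _)
  let ζ : (Fin n → ℝ) → ℝ≥0∞ := fun x => if η x = ∞ then 1 else η x
  have ζm : Measurable ζ := Measurable.ite (ηm (measurableSet_singleton _)) measurable_const ηm
  have ζη : ζ =ᵐ[volume] η := by
    filter_upwards [ηt] with x hx
    simp [ζ, hx]
  have ζ0 : ∀ x, ζ x ≠ 0 := by
    intro x; simp only [ζ]; split_ifs
    · simp
    · exact η0 x
  have ζt : ∀ x, ζ x ≠ ∞ := by
    intro x; simp only [ζ]; split_ifs with h
    · simp
    · exact h
  have i0 : ∀ x, (U x)⁻¹ ≠ 0 := fun x => by simpa using Ut x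
  have it : ∀ x, (U x)⁻¹ ≠ ∞ := fun x => by simpa using U0 x
  have ζr0 : ∀ x, ζ x ^ r ≠ 0 := fun x => (ENNReal.rpow_pos (pos_iff_ne_zero.2 (ζ0 x)) (ζt x)).ne'
  have ζrt : ∀ x, ζ x ^ r ≠ ∞ := fun x => ENNReal.rpow_ne_top_of_nonneg hr.le (ζt x)
  refine ⟨fun x => ζ x ^ r * U x, fun x => ζ x * (U x)⁻¹, (ζm.pow_const r).mul hUm,
    ζm.mul hUm.inv, fun x => ⟨mul_ne_zero (ζr0 x) (U0 x), ENNReal.mul_ne_top (ζrt x) (Ut x),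
      mul_ne_zero (ζ0 x) (i0 x), ENNReal.mul_ne_top (ζt x) (it x)⟩, ?_, ?_, ?_⟩
  · intro x
    rw [ENNReal.mul_rpow_of_ne_top (ζt x) (it x), hinv, neg_neg]
    calc W x = U x ^ (1 + r) := by rw [add_comm, UW]
      _ = U x * U x ^ r := by rw [ENNReal.rpow_add _ _ (U0 x) (Ut x), ENNReal.rpow_one]
      _ = (ζ x ^ r * ζ x ^ (-r)) * (U x * U x ^ r) := by
          rw [← ENNReal.rpow_add _ _ (ζ0 x) (ζt x)]; simp
      _ = _ := by ring
  · refine isA1_of_MB (fun x => η x ^ r * U x) _ ?_ (A ^ r)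
      (ENNReal.rpow_ne_top_of_nonneg hr.le hA) ?_
    · filter_upwards [ζη] with x hx
      rw [hx]
    · intro x
      have h1 : T1 η x ≤ A * η x := (le_max_left _ _).trans (hη x)
      have h2 := ENNReal.rpow_le_rpow h1 hr.le
      simp only [T1] at h2
      rw [← ENNReal.rpow_mul, one_div_mul_cancel hr.ne', ENNReal.rpow_one,
        ENNReal.mul_rpow_of_nonneg _ _ hr.le] at h2
      have h3 := mul_le_mul_right h2 (U x)
      rw [← mul_assoc, ENNReal.mul_inv_cancel (U0 x) (Ut x), one_mul] at h3
      refine h3.trans (le_of_eq ?_)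
      ring
  · refine isA1_of_MB (fun x => η x * (U x)⁻¹) _ ?_ A hA ?_
    · filter_upwards [ζη] with x hx
      rw [hx]
    · intro x
      have h1 : T2 η x ≤ A * η x := (le_max_right _ _).trans (hη x)
      simp only [T2] at h1
      have h3 := mul_le_mul_right h1 (U x)⁻¹
      rw [← mul_assoc, ENNReal.inv_mul_cancel (U0 x) (Ut x), one_mul] at h3
      refine h3.trans (le_of_eq ?_)
      ring


/-! ### Averages and class membership -/

lemma eavg_mono_ae {Q : Set (Fin n → ℝ)} {f g : (Fin n → ℝ) → ℝ≥0∞}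
    (h : ∀ᵐ x ∂(volume.restrict Q), f x ≤ g x) : eavg Q f ≤ eavg Q g := by
  unfold eavg
  exact ENNReal.div_le_div_right (lintegral_mono_ae h) _

lemma eavg_congr_ae {Q : Set (Fin n → ℝ)} {f g : (Fin n → ℝ) → ℝ≥0∞}
    (h : ∀ᵐ x ∂(volume : Measure (Fin n → ℝ)), f x = g x) : eavg Q f = eavg Q g := by
  unfold eavg
  rw [lintegral_congr_ae (ae_restrict_of_ae h)]

lemma eavg_const {Q : Set (Fin n → ℝ)} (hQ : IsCube Q) (c : ℝ≥0∞) : eavg Q (fun _ => c) = c := by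
  unfold eavg
  rw [setLIntegral_const]
  exact ENNReal.mul_div_cancel_right hQ.vol_ne_zero hQ.vol_ne_top

lemma eavg_const_mul {Q : Set (Fin n → ℝ)} {c : ℝ≥0∞} (hc : c ≠ ∞) (f : (Fin n → ℝ) → ℝ≥0∞) :
    eavg Q (fun x => c * f x) = c * eavg Q f := by
  unfold eavg
  rw [lintegral_const_mul' _ _ hc, mul_div_assoc]

lemma eavg_ne_zero {Q : Set (Fin n → ℝ)} (hQ : IsCube Q) {f : (Fin n → ℝ) → ℝ≥0∞}
    (hf : Measurable f) (h : ∀ᵐ x ∂(volume : Measure (Fin n → ℝ)), 0 < f x) : eavg Q f ≠ 0 := by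
  unfold eavg
  refine (ENNReal.div_pos ?_ hQ.vol_ne_top).ne'
  intro h0
  rw [lintegral_eq_zero_iff hf] at h0
  have : volume.restrict Q = 0 := by
    rw [← ae_eq_bot, ← Filter.eventually_false_iff_eq_bot]
    filter_upwards [h0, ae_restrict_of_ae h] with x hx hx' using hx'.ne' hx
  exact hQ.vol_ne_zero (by simpa using this)

lemma eavg_ne_top_iff {Q : Set (Fin n → ℝ)} (hQ : IsCube Q) {f : (Fin n → ℝ) → ℝ≥0∞} :
    eavg Q f ≠ ∞ ↔ ∫⁻ x in Q, f x ≠ ∞ := by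
  unfold eavg
  constructor
  · intro h h'
    rw [h'] at h
    exact h (ENNReal.top_div_of_ne_top hQ.vol_ne_top)
  · intro h
    exact ENNReal.div_ne_top h hQ.vol_ne_zero

lemma eavg_mul_vol {Q : Set (Fin n → ℝ)} (hQ : IsCube Q) (f : (Fin n → ℝ) → ℝ≥0∞) :
    ∫⁻ x in Q, f x = eavg Q f * volume Q :=
  (ENNReal.div_mul_cancel hQ.vol_ne_zero hQ.vol_ne_top).symm

/-- The Jensen inequality for averages. -/
lemma eavg_jensen {Q : Set (Fin n → ℝ)} (hQ : IsCube Q) {f : (Fin n → ℝ) → ℝ≥0∞}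
    (hf : Measurable f) (s : ℝ) (hs : 1 < s) :
    eavg Q f ≤ (eavg Q fun x => f x ^ s) ^ (1 / s) := by
  have hpq : s.HolderConjugate (s / (s - 1)) := by
    rw [Real.holderConjugate_iff]
    have : s - 1 ≠ 0 := by linarith
    refine ⟨hs, ?_⟩
    field_simp
    ring
  have h1 := ENNReal.lintegral_mul_le_Lp_mul_Lq (volume.restrict Q) hpq
    (f := f) (g := fun _ => 1) hf.aemeasurable measurable_const.aemeasurable
  simp only [ENNReal.one_rpow, lintegral_const, Measure.restrict_apply MeasurableSet.univ,
    Set.univ_inter, one_mul, Pi.mul_apply, mul_one] at h1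
  rw [eavg_mul_vol hQ, eavg_mul_vol hQ, ENNReal.mul_rpow_of_nonneg _ _ (by positivity), mul_assoc,
    ← ENNReal.rpow_add _ _ hQ.vol_ne_zero hQ.vol_ne_top] at h1
  have e : 1 / s + 1 / (s / (s - 1)) = 1 := by
    have : s - 1 ≠ 0 := by linarith
    field_simp
    ring
  rw [e, ENNReal.rpow_one] at h1
  exact (ENNReal.mul_le_mul_iff_left hQ.vol_ne_zero hQ.vol_ne_top).1 h1

lemma one_le_eavg_mul {Q : Set (Fin n → ℝ)} (hQ : IsCube Q) (r : ℝ) (hr : 0 < r)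
    (u : (Fin n → ℝ) → ℝ≥0∞) (hu : Measurable u) (u0 : ∀ x, u x ≠ 0) (ut : ∀ x, u x ≠ ∞) :
    1 ≤ eavg Q (fun x => u x ^ (-r)) * eavg Q u ^ r := by
  have h := holder_cube r hr (fun x => u x ^ (-r)) u (hu.pow_const _)
    (fun x => (ENNReal.rpow_pos (pos_iff_ne_zero.2 (u0 x)) (ut x)).ne')
    (fun x => ENNReal.rpow_ne_top_of_ne_zero (u0 x) (ut x))
    (fun x => by
      rw [← ENNReal.rpow_mul]
      conv_lhs => rw [← ENNReal.rpow_one (u x)]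
      congr 1; field_simp) Q
  rw [eavg_mul_vol hQ, eavg_mul_vol hQ u, ENNReal.mul_rpow_of_nonneg _ _ hr.le,
    ENNReal.rpow_add _ _ hQ.vol_ne_zero hQ.vol_ne_top, ENNReal.rpow_one] at h
  have v0 : volume Q ^ r * volume Q ≠ 0 := mul_ne_zero
    (ENNReal.rpow_pos (pos_iff_ne_zero.2 hQ.vol_ne_zero) hQ.vol_ne_top).ne' hQ.vol_ne_zero
  have vt : volume Q ^ r * volume Q ≠ ∞ := ENNReal.mul_ne_top
    (ENNReal.rpow_ne_top_of_nonneg hr.le hQ.vol_ne_top) hQ.vol_ne_top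
  refine (ENNReal.mul_le_mul_iff_left v0 vt).1 ?_
  rw [one_mul]
  refine h.trans (le_of_eq ?_)
  ring

lemma memAp_iff {p : ℝ} (hp : 1 < p) (w : (Fin n → ℝ) → ℝ≥0∞) :
    MemAp p w ↔ ∃ C : ℝ≥0∞, C ≠ ∞ ∧ ∀ Q, IsCube Q →
      eavg Q w * (eavg Q fun x => w x ^ (-(1 / (p - 1)))) ^ (p - 1) ≤ C := by
  have e : 1 - p / (p - 1) = -(1 / (p - 1)) := by
    have : p - 1 ≠ 0 := by linarith
    field_simp
    ring
  unfold MemAp ApConst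
  rw [if_neg hp.ne', e]
  constructor
  · intro h
    refine ⟨_, h.ne, fun Q hQ => ?_⟩
    exact le_iSup₂ (f := fun (Q : Set (Fin n → ℝ)) (_ : IsCube Q) =>
      eavg Q w * (eavg Q fun x => w x ^ (-(1 / (p - 1)))) ^ (p - 1)) Q hQ
  · rintro ⟨C, hC, h⟩
    exact (iSup₂_le h).trans_lt (lt_top_iff_ne_top.2 hC)

lemma memA1_iff {w : (Fin n → ℝ) → ℝ≥0∞}
    (hw : ∀ᵐ x ∂(volume : Measure (Fin n → ℝ)), 0 < w x ∧ w x < ∞) :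
    MemAp 1 w ↔ IsA1 w := by
  unfold MemAp ApConst IsA1
  rw [if_pos rfl]
  constructor
  · intro h
    refine ⟨_, h.ne, fun Q hQ => ?_⟩
    have h1 := le_iSup₂ (f := fun (Q : Set (Fin n → ℝ)) (_ : IsCube Q) =>
      essSup (fun x => eavg Q w / w x) (volume.restrict Q)) Q hQ
    filter_upwards [ENNReal.ae_le_essSup (μ := volume.restrict Q) (fun x => eavg Q w / w x),
      ae_restrict_of_ae hw] with x hx hx'
    exact (ENNReal.div_le_iff hx'.1.ne' hx'.2.ne).1 (hx.trans h1)
  · rintro ⟨C, hC, h⟩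
    refine lt_of_le_of_lt (iSup₂_le fun Q hQ => ?_) (lt_top_iff_ne_top.2 hC)
    refine essSup_le_of_ae_le _ ?_
    filter_upwards [h Q hQ] with x hx
    exact ENNReal.div_le_of_le_mul hx

lemma weight_eavg {w : (Fin n → ℝ) → ℝ≥0∞} (hw : IsWeight w) {Q} (hQ : IsCube Q) :
    eavg Q w ≠ 0 ∧ eavg Q w ≠ ∞ :=
  ⟨eavg_ne_zero hQ hw.1 (hw.2.1.mono fun _ h => h.1), (eavg_ne_top_iff hQ).2 (hw.2.2 Q hQ).ne⟩

lemma memRH_iff {s : ℝ} {w : (Fin n → ℝ) → ℝ≥0∞} (hw : IsWeight w) :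
    MemRH s w ↔ ∃ C : ℝ≥0∞, C ≠ ∞ ∧ ∀ Q, IsCube Q →
      (eavg Q fun x => w x ^ s) ^ (1 / s) ≤ C * eavg Q w := by
  unfold MemRH RHConst
  constructor
  · intro h
    refine ⟨_, h.ne, fun Q hQ => ?_⟩
    have h1 := le_iSup₂ (f := fun (Q : Set (Fin n → ℝ)) (_ : IsCube Q) =>
      (eavg Q fun x => w x ^ s) ^ (1 / s) / eavg Q w) Q hQ
    have := weight_eavg hw hQ
    exact (ENNReal.div_le_iff this.1 this.2).1 h1
  · rintro ⟨C, hC, h⟩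
    refine lt_of_le_of_lt (iSup₂_le fun Q hQ => ?_) (lt_top_iff_ne_top.2 hC)
    exact ENNReal.div_le_of_le_mul (h Q hQ)

lemma memRHInf_iff {w : (Fin n → ℝ) → ℝ≥0∞} (hw : IsWeight w) :
    MemRHInf w ↔ ∃ C : ℝ≥0∞, C ≠ ∞ ∧ ∀ Q, IsCube Q →
      ∀ᵐ x ∂(volume.restrict Q), w x ≤ C * eavg Q w := by
  unfold MemRHInf RHInfConst
  constructor
  · intro h
    refine ⟨_, h.ne, fun Q hQ => ?_⟩
    have h1 := le_iSup₂ (f := fun (Q : Set (Fin n → ℝ)) (_ : IsCube Q) =>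
      essSup (fun x => w x / eavg Q w) (volume.restrict Q)) Q hQ
    have := weight_eavg hw hQ
    filter_upwards [ENNReal.ae_le_essSup (μ := volume.restrict Q) (fun x => w x / eavg Q w)]
      with x hx
    exact (ENNReal.div_le_iff this.1 this.2).1 (hx.trans h1)
  · rintro ⟨C, hC, h⟩
    refine lt_of_le_of_lt (iSup₂_le fun Q hQ => ?_) (lt_top_iff_ne_top.2 hC)
    refine essSup_le_of_ae_le _ ?_
    filter_upwards [h Q hQ] with x hx
    exact ENNReal.div_le_of_le_mul hx

lemma IsA1.eavg_ne_top {u : (Fin n → ℝ) → ℝ≥0∞} (h : IsA1 u) (ut : ∀ x, u x ≠ ∞)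
    {Q} (hQ : IsCube Q) : eavg Q u ≠ ∞ := by
  obtain ⟨C, hC, h⟩ := h
  have : (ae (volume.restrict Q)).NeBot := by
    rw [ae_neBot]
    intro h0
    exact hQ.vol_ne_zero (by simpa using h0)
  obtain ⟨x, hx⟩ := (h Q hQ).exists
  exact ne_top_of_le_ne_top (ENNReal.mul_ne_top hC (ut x)) hx

/-! ### The two directions -/

lemma backward (p s : ℝ) (hp : 1 < p) (hs : 1 < s)
    (w v₁ v₂ : (Fin n → ℝ) → ℝ≥0∞) (hw : IsWeight w) (hv₁ : IsWeight v₁) (hv₂ : IsWeight v₂)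
    (hprod : ∀ x, w x = v₁ x * v₂ x) (h1 : MemAp 1 v₁) (h2 : MemRH s v₁) (h3 : MemAp p v₂)
    (h4 : MemRHInf v₂) : MemAp p w ∧ MemRH s w := by
  obtain ⟨A, hA, h1⟩ := (memA1_iff hv₁.2.1).1 h1
  obtain ⟨R, hR, h2⟩ := (memRH_iff hv₁).1 h2
  obtain ⟨P, hP, h3⟩ := (memAp_iff hp _).1 h3
  obtain ⟨B, hB, h4⟩ := (memRHInf_iff hv₂).1 h4
  have hs0 : 0 < s := by linarith
  have hρ : 0 < p - 1 := by linarith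
  constructor
  · refine (memAp_iff hp _).2 ⟨B * A * P, ENNReal.mul_ne_top (ENNReal.mul_ne_top hB hA) hP,
      fun Q hQ => ?_⟩
    obtain ⟨a0, hatop⟩ := weight_eavg hv₁ hQ
    obtain ⟨b0, bt⟩ := weight_eavg hv₂ hQ
    set a := eavg Q v₁
    set b := eavg Q v₂
    set X := eavg Q fun x => v₂ x ^ (-(1 / (p - 1)))
    have e1 : eavg Q w ≤ (B * b) * a := by
      rw [← eavg_const_mul (ENNReal.mul_ne_top hB bt)]
      refine eavg_mono_ae ?_
      filter_upwards [h4 Q hQ] with x hx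
      rw [hprod, mul_comm]
      gcongr
    have hc : (A * a⁻¹) ^ (1 / (p - 1)) ≠ ∞ := ENNReal.rpow_ne_top_of_nonneg (by positivity)
      (ENNReal.mul_ne_top hA (by simpa using a0))
    have e2 : (eavg Q fun x => w x ^ (-(1 / (p - 1)))) ≤ (A * a⁻¹) ^ (1 / (p - 1)) * X := by
      rw [← eavg_const_mul hc]
      refine eavg_mono_ae ?_
      filter_upwards [h1 Q hQ, ae_restrict_of_ae hv₁.2.1, ae_restrict_of_ae hv₂.2.1]
        with x hx hx1 hx2
      rw [hprod, ENNReal.mul_rpow_of_ne_top hx1.2.ne hx2.2.ne]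
      gcongr
      rw [ENNReal.rpow_neg, ← ENNReal.inv_rpow]
      refine ENNReal.rpow_le_rpow ?_ (by positivity)
      rw [← div_eq_mul_inv, ENNReal.le_div_iff_mul_le (Or.inl a0) (Or.inl hatop), mul_comm,
        ← div_eq_mul_inv]
      exact ENNReal.div_le_of_le_mul hx
    calc eavg Q w * (eavg Q fun x => w x ^ (-(1 / (p - 1)))) ^ (p - 1)
        ≤ ((B * b) * a) * ((A * a⁻¹) ^ (1 / (p - 1)) * X) ^ (p - 1) := by gcongr
      _ = ((B * b) * a) * ((A * a⁻¹) * X ^ (p - 1)) := by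
          rw [ENNReal.mul_rpow_of_nonneg _ _ hρ.le, ← ENNReal.rpow_mul, one_div_mul_cancel hρ.ne',
            ENNReal.rpow_one]
      _ = (B * A) * (b * X ^ (p - 1)) * (a * a⁻¹) := by ring
      _ ≤ (B * A) * P * 1 := by
          rw [ENNReal.mul_inv_cancel a0 hatop]
          gcongr
          exact h3 Q hQ
      _ = B * A * P := mul_one _
  · refine (memRH_iff hw).2 ⟨B * R * A, ENNReal.mul_ne_top (ENNReal.mul_ne_top hB hR) hA,
      fun Q hQ => ?_⟩
    obtain ⟨a0, hatop⟩ := weight_eavg hv₁ hQ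
    obtain ⟨b0, bt⟩ := weight_eavg hv₂ hQ
    set a := eavg Q v₁
    set b := eavg Q v₂
    have e1 : (eavg Q fun x => w x ^ s) ≤ (B * b) ^ s * eavg Q fun x => v₁ x ^ s := by
      rw [← eavg_const_mul (ENNReal.rpow_ne_top_of_nonneg hs0.le (ENNReal.mul_ne_top hB bt))]
      refine eavg_mono_ae ?_
      filter_upwards [h4 Q hQ] with x hx
      rw [← ENNReal.mul_rpow_of_nonneg _ _ hs0.le, hprod, mul_comm]
      gcongr
    have e2 : a * b ≤ A * eavg Q w := by
      rw [← eavg_const_mul hA, ← eavg_const_mul hatop]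
      refine eavg_mono_ae ?_
      filter_upwards [h1 Q hQ] with x hx
      rw [hprod, ← mul_assoc]
      gcongr
    calc (eavg Q fun x => w x ^ s) ^ (1 / s)
        ≤ ((B * b) ^ s * eavg Q fun x => v₁ x ^ s) ^ (1 / s) := by gcongr
      _ = (B * b) * (eavg Q fun x => v₁ x ^ s) ^ (1 / s) := by
          rw [ENNReal.mul_rpow_of_nonneg _ _ (by positivity), ← ENNReal.rpow_mul,
            mul_one_div_cancel hs0.ne', ENNReal.rpow_one]
      _ ≤ (B * b) * (R * a) := by gcongr; exact h2 Q hQ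
      _ = B * R * (a * b) := by ring
      _ ≤ B * R * (A * eavg Q w) := by gcongr
      _ = _ := by ring

lemma forward_pair (p s : ℝ) (hp : 1 < p) (hs : 1 < s)
    (w : (Fin n → ℝ) → ℝ≥0∞) (hw : IsWeight w) (h1 : MemAp p w) (h2 : MemRH s w) :
    ∃ (K : ℝ≥0∞) (W S : (Fin n → ℝ) → ℝ≥0∞), APair (s * (p - 1)) K W S ∧
      ∀ᵐ x ∂(volume : Measure (Fin n → ℝ)), W x = w x ^ s := by
  obtain ⟨P, hP, h1⟩ := (memAp_iff hp _).1 h1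
  obtain ⟨R, hR, h2⟩ := (memRH_iff hw).1 h2
  have hs0 : 0 < s := by linarith
  have hρ : 0 < p - 1 := by linarith
  have hr : 0 < s * (p - 1) := by positivity
  let W : (Fin n → ℝ) → ℝ≥0∞ := fun x => if w x = 0 ∨ w x = ∞ then 1 else w x ^ s
  let S : (Fin n → ℝ) → ℝ≥0∞ := fun x => W x ^ (-(1 / (s * (p - 1))))
  have hWw : ∀ᵐ x ∂(volume : Measure (Fin n → ℝ)), W x = w x ^ s := by
    filter_upwards [hw.2.1] with x hx
    simp [W, hx.1.ne', hx.2.ne]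
  have hSw : ∀ᵐ x ∂(volume : Measure (Fin n → ℝ)), S x = w x ^ (-(1 / (p - 1))) := by
    filter_upwards [hWw] with x hx
    simp only [S]
    rw [hx, ← ENNReal.rpow_mul]
    congr 1
    field_simp
  have eW : ∀ Q, eavg Q W = eavg Q fun x => w x ^ s := fun Q => eavg_congr_ae hWw
  have eS : ∀ Q, eavg Q S = eavg Q fun x => w x ^ (-(1 / (p - 1))) := fun Q => eavg_congr_ae hSw
  have bW : ∀ Q, IsCube Q → eavg Q W ≤ (R * eavg Q w) ^ s := by
    intro Q hQ
    rw [eW]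
    have := ENNReal.rpow_le_rpow (h2 Q hQ) hs0.le
    rwa [← ENNReal.rpow_mul, one_div_mul_cancel hs0.ne', ENNReal.rpow_one] at this
  refine ⟨(R * P) ^ s, W, S, ?_, hWw⟩
  refine ⟨hr, ENNReal.rpow_ne_top_of_nonneg hs0.le (ENNReal.mul_ne_top hR hP), ?_, ?_, ?_,
    fun x => rfl, ?_, ?_, ?_⟩
  · refine Measurable.ite ?_ measurable_const (hw.1.pow_const s)
    exact (hw.1 (measurableSet_singleton 0)).union (hw.1 (measurableSet_singleton ∞))
  · intro x
    simp only [W]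
    split_ifs with h
    · simp
    · push Not at h
      exact (ENNReal.rpow_pos (pos_iff_ne_zero.2 h.1) h.2).ne'
  · intro x
    simp only [W]
    split_ifs with h
    · simp
    · push Not at h
      exact ENNReal.rpow_ne_top_of_ne_zero h.1 h.2
  · intro Q hQ
    rw [← eavg_ne_top_iff hQ]
    exact ne_top_of_le_ne_top (ENNReal.rpow_ne_top_of_nonneg hs0.le
      (ENNReal.mul_ne_top hR (weight_eavg hw hQ).2)) (bW Q hQ)
  · intro Q hQ
    rw [← eavg_ne_top_iff hQ, eS]
    intro ht
    have := h1 Q hQ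
    rw [ht, ENNReal.top_rpow_of_pos hρ, ENNReal.mul_top (weight_eavg hw hQ).1] at this
    exact hP (top_le_iff.1 this)
  · intro Q hQ
    have key : eavg Q W * eavg Q S ^ (s * (p - 1)) ≤ (R * P) ^ s := by
      calc eavg Q W * eavg Q S ^ (s * (p - 1))
          ≤ (R * eavg Q w) ^ s * (eavg Q S ^ (p - 1)) ^ s := by
            rw [mul_comm s, ENNReal.rpow_mul]
            gcongr
            exact bW Q hQ
        _ = (R * (eavg Q w * eavg Q S ^ (p - 1))) ^ s := by
            rw [← ENNReal.mul_rpow_of_nonneg _ _ hs0.le, mul_assoc]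
        _ ≤ (R * P) ^ s := by
            gcongr
            rw [eS]
            exact h1 Q hQ
    rw [eavg_mul_vol hQ, eavg_mul_vol hQ S, ENNReal.mul_rpow_of_nonneg _ _ hr.le,
      ENNReal.rpow_add _ _ hQ.vol_ne_zero hQ.vol_ne_top, ENNReal.rpow_one]
    calc eavg Q W * volume Q * (eavg Q S ^ (s * (p - 1)) * volume Q ^ (s * (p - 1)))
        = (eavg Q W * eavg Q S ^ (s * (p - 1))) * (volume Q ^ (s * (p - 1)) * volume Q) := by ring
      _ ≤ _ := by gcongr

lemma forward (p s : ℝ) (hp : 1 < p) (hs : 1 < s)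
    (w : (Fin n → ℝ) → ℝ≥0∞) (hw : IsWeight w) (h1 : MemAp p w) (h2 : MemRH s w) :
    ∃ v₁ v₂ : (Fin n → ℝ) → ℝ≥0∞, IsWeight v₁ ∧ IsWeight v₂ ∧
        (∀ x, w x = v₁ x * v₂ x) ∧
        MemAp 1 v₁ ∧ MemRH s v₁ ∧ MemAp p v₂ ∧ MemRHInf v₂ := by
  obtain ⟨K, W, S, hA, hW⟩ := forward_pair p s hp hs w hw h1 h2
  obtain ⟨u₁, u₂, m₁, m₂, hu, hfac, A₁, A₂⟩ := jones hA
  have hs0 : 0 < s := by linarith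
  have hs1 : 0 < 1 / s := by positivity
  have hρ : 0 < p - 1 := by linarith
  have avg1t : ∀ Q, IsCube Q → eavg Q u₁ ≠ ∞ :=
    fun Q hQ => A₁.eavg_ne_top (fun x => (hu x).2.1) hQ
  have avg2t : ∀ Q, IsCube Q → eavg Q u₂ ≠ ∞ :=
    fun Q hQ => A₂.eavg_ne_top (fun x => (hu x).2.2.2) hQ
  have avg20 : ∀ Q, IsCube Q → eavg Q u₂ ≠ 0 :=
    fun Q hQ => eavg_ne_zero hQ m₂ (Filter.Eventually.of_forall fun x =>
      pos_iff_ne_zero.2 (hu x).2.2.1)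
  obtain ⟨C₁, hC₁, b₁⟩ := A₁
  obtain ⟨C₂, hC₂, b₂⟩ := A₂
  let v₁ : (Fin n → ℝ) → ℝ≥0∞ := fun x => u₁ x ^ (1 / s)
  let v₂ : (Fin n → ℝ) → ℝ≥0∞ := fun x => w x / v₁ x
  have v₁0 : ∀ x, v₁ x ≠ 0 := fun x =>
    (ENNReal.rpow_pos (pos_iff_ne_zero.2 (hu x).1) (hu x).2.1).ne'
  have v₁t : ∀ x, v₁ x ≠ ∞ := fun x => ENNReal.rpow_ne_top_of_ne_zero (hu x).1 (hu x).2.1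
  have v₁m : Measurable v₁ := m₁.pow_const _
  have v₂m : Measurable v₂ := hw.1.div v₁m
  have v₁s : ∀ x, v₁ x ^ s = u₁ x := by
    intro x
    simp only [v₁]
    rw [← ENNReal.rpow_mul, one_div_mul_cancel hs0.ne', ENNReal.rpow_one]
  have hv₂ : ∀ᵐ x ∂(volume : Measure (Fin n → ℝ)), v₂ x = u₂ x ^ (-(p - 1)) := by
    filter_upwards [hW] with x hx
    have e1 : w x = v₁ x * u₂ x ^ (-(p - 1)) := by
      rw [hfac] at hx
      have h3 : (w x ^ s) ^ (1 / s) = w x := by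
        rw [← ENNReal.rpow_mul, mul_one_div_cancel hs0.ne', ENNReal.rpow_one]
      rw [← h3, ← hx, ENNReal.mul_rpow_of_nonneg _ _ hs1.le, ← ENNReal.rpow_mul]
      congr 2
      field_simp
    simp only [v₂]
    rw [e1, mul_comm]
    exact ENNReal.mul_div_cancel_right (v₁0 x) (v₁t x)
  -- estimates for `v₁`
  have est₁ : ∀ Q, IsCube Q → ∀ᵐ x ∂(volume.restrict Q),
      eavg Q u₁ ^ (1 / s) ≤ C₁ ^ (1 / s) * v₁ x := by
    intro Q hQ
    filter_upwards [b₁ Q hQ] with x hx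
    rw [← ENNReal.mul_rpow_of_nonneg _ _ hs1.le]
    gcongr
  have jen₁ : ∀ Q, IsCube Q → eavg Q v₁ ≤ eavg Q u₁ ^ (1 / s) := by
    intro Q hQ
    have := eavg_jensen hQ v₁m s hs
    simpa only [v₁s] using this
  have C₁s : C₁ ^ (1 / s) ≠ ∞ := ENNReal.rpow_ne_top_of_nonneg hs1.le hC₁
  have w₁ : IsWeight v₁ := by
    refine ⟨v₁m, Filter.Eventually.of_forall fun x => ⟨pos_iff_ne_zero.2 (v₁0 x),
      lt_top_iff_ne_top.2 (v₁t x)⟩, fun Q hQ => lt_top_iff_ne_top.2 ?_⟩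
    rw [← eavg_ne_top_iff hQ]
    exact ne_top_of_le_ne_top (ENNReal.rpow_ne_top_of_nonneg hs1.le (avg1t Q hQ)) (jen₁ Q hQ)
  -- estimates for `v₂`
  have C₂p : C₂ ^ (p - 1) ≠ ∞ := ENNReal.rpow_ne_top_of_nonneg hρ.le hC₂
  have est₂ : ∀ Q, IsCube Q → ∀ᵐ x ∂(volume.restrict Q),
      v₂ x ≤ C₂ ^ (p - 1) * eavg Q u₂ ^ (-(p - 1)) := by
    intro Q hQ
    filter_upwards [b₂ Q hQ, ae_restrict_of_ae hv₂] with x hx hx2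
    rw [hx2, ENNReal.rpow_neg, ENNReal.rpow_neg, ← ENNReal.inv_rpow, ← ENNReal.inv_rpow,
      ← ENNReal.mul_rpow_of_nonneg _ _ hρ.le]
    gcongr
    rw [← div_eq_mul_inv, ENNReal.le_div_iff_mul_le (Or.inl (avg20 Q hQ)) (Or.inl (avg2t Q hQ)),
      mul_comm, ← div_eq_mul_inv]
    exact ENNReal.div_le_of_le_mul hx
  have avgv₂ : ∀ Q, IsCube Q → eavg Q v₂ ≤ C₂ ^ (p - 1) * eavg Q u₂ ^ (-(p - 1)) := by
    intro Q hQ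
    refine (eavg_mono_ae (est₂ Q hQ)).trans (le_of_eq ?_)
    exact eavg_const hQ _
  have negp : ∀ Q, IsCube Q → eavg Q u₂ ^ (-(p - 1)) * eavg Q u₂ ^ (p - 1) = 1 := by
    intro Q hQ
    rw [← ENNReal.rpow_add _ _ (avg20 Q hQ) (avg2t Q hQ)]
    simp
  have w₂ : IsWeight v₂ := by
    refine ⟨v₂m, ?_, fun Q hQ => lt_top_iff_ne_top.2 ?_⟩
    · filter_upwards [hw.2.1] with x hx
      exact ⟨ENNReal.div_pos hx.1.ne' (v₁t x), ENNReal.div_lt_top hx.2.ne (v₁0 x)⟩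
    · rw [← eavg_ne_top_iff hQ]
      exact ne_top_of_le_ne_top (ENNReal.mul_ne_top C₂p
        (ENNReal.rpow_ne_top_of_ne_zero (avg20 Q hQ) (avg2t Q hQ))) (avgv₂ Q hQ)
  refine ⟨v₁, v₂, w₁, w₂, fun x => ?_, ?_, ?_, ?_, ?_⟩
  · exact (ENNReal.mul_div_cancel (v₁0 x) (v₁t x)).symm
  · refine (memA1_iff w₁.2.1).2 ⟨C₁ ^ (1 / s), C₁s, fun Q hQ => ?_⟩
    filter_upwards [est₁ Q hQ] with x hx
    exact (jen₁ Q hQ).trans hx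
  · refine (memRH_iff w₁).2 ⟨C₁ ^ (1 / s), C₁s, fun Q hQ => ?_⟩
    simp only [v₁s]
    rw [← eavg_const_mul C₁s]
    refine le_trans (le_of_eq ?_) (eavg_mono_ae (est₁ Q hQ))
    exact (eavg_const hQ _).symm
  · refine (memAp_iff hp _).2 ⟨C₂ ^ (p - 1), C₂p, fun Q hQ => ?_⟩
    have e : (eavg Q fun x => v₂ x ^ (-(1 / (p - 1)))) = eavg Q u₂ := by
      refine eavg_congr_ae ?_
      filter_upwards [hv₂] with x hx
      rw [hx, ← ENNReal.rpow_mul]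
      conv_rhs => rw [← ENNReal.rpow_one (u₂ x)]
      congr 1
      field_simp
    rw [e]
    calc eavg Q v₂ * eavg Q u₂ ^ (p - 1)
        ≤ C₂ ^ (p - 1) * eavg Q u₂ ^ (-(p - 1)) * eavg Q u₂ ^ (p - 1) := by
          gcongr; exact avgv₂ Q hQ
      _ = C₂ ^ (p - 1) := by rw [mul_assoc, negp Q hQ, mul_one]
  · refine (memRHInf_iff w₂).2 ⟨C₂ ^ (p - 1), C₂p, fun Q hQ => ?_⟩
    have e : eavg Q v₂ = eavg Q fun x => u₂ x ^ (-(p - 1)) := eavg_congr_ae hv₂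
    have h5 := one_le_eavg_mul hQ (p - 1) hρ u₂ m₂ (fun x => (hu x).2.2.1) (fun x => (hu x).2.2.2)
    rw [← e] at h5
    have h6 : eavg Q u₂ ^ (-(p - 1)) ≤ eavg Q v₂ := by
      calc eavg Q u₂ ^ (-(p - 1)) = eavg Q u₂ ^ (-(p - 1)) * 1 := (mul_one _).symm
        _ ≤ eavg Q u₂ ^ (-(p - 1)) * (eavg Q v₂ * eavg Q u₂ ^ (p - 1)) := by gcongr
        _ = eavg Q v₂ * (eavg Q u₂ ^ (-(p - 1)) * eavg Q u₂ ^ (p - 1)) := by ring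
        _ = eavg Q v₂ := by rw [negp Q hQ, mul_one]
    filter_upwards [est₂ Q hQ] with x hx
    exact hx.trans (by gcongr)


/-- Generalized factorization: for `1 < p, s < ∞`, a weight
`w ∈ A_p ∩ RH_s` iff `w = v₁ v₂` with `v₁ ∈ A_1 ∩ RH_s` and `v₂ ∈ A_p ∩ RH_∞`. -/
theorem statement11 (n : ℕ) (p s : ℝ) (hp : 1 < p) (hs : 1 < s)
    (w : (Fin n → ℝ) → ℝ≥0∞) (hw : IsWeight w) :
    (MemAp p w ∧ MemRH s w) ↔
      ∃ v₁ v₂ : (Fin n → ℝ) → ℝ≥0∞, IsWeight v₁ ∧ IsWeight v₂ ∧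
        (∀ x, w x = v₁ x * v₂ x) ∧
        MemAp 1 v₁ ∧ MemRH s v₁ ∧ MemAp p v₂ ∧ MemRHInf v₂ := by
  constructor
  · rintro ⟨h1, h2⟩
    exact forward p s hp hs w hw h1 h2
  · rintro ⟨v₁, v₂, hv₁, hv₂, hprod, h1, h2, h3, h4⟩
    exact backward p s hp hs w v₁ v₂ hw hv₁ hv₂ hprod h1 h2 h3 h4
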